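/- arXiv:math/0602081 — 8 statements merged into one kernel-verified Lean document; each statement's English description precedes it below -/
import Mathlib

section
/- Parameter-dependence of fixed points (smooth real case): Let E be a real normed vector space, F a real Banach space, P ⊆ E and U ⊆ F open subsets, and f : P × U → F a map that is infinitely continuously (Fréchet) differentiable on P × U, such that there is θ ∈ [0,1) with ‖f(p,x) − f(p,y)‖ ≤ θ·‖x − y‖ for all x, y ∈ U and p ∈ P. Then the set Q := {p ∈ P : f(p,·) has a fixed point in U} is open in P, for each p ∈ Q the fixed point x_p ∈ U is unique, and the map φ : Q → F, φ(p) := x_p, is infinitely continuously (Fréchet) differentiable on the open set Q. -/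
open Set Metric Filter Topology

theorem aux_open
    {E F : Type*}
    [NormedAddCommGroup E] [NormedSpace ℝ E]
    [NormedAddCommGroup F] [NormedSpace ℝ F] [CompleteSpace F]
    {P : Set E} {U : Set F} (hP : IsOpen P) (hU : IsOpen U)
    (f : E × F → F) (hf : ContinuousOn f (P ×ˢ U))
    (θ : ℝ) (hθ₀ : 0 ≤ θ) (hθ₁ : θ < 1)
    (hcontr : ∀ p ∈ P, ∀ x ∈ U, ∀ y ∈ U, ‖f (p, x) - f (p, y)‖ ≤ θ * ‖x - y‖) :
    IsOpen {p ∈ P | ∃ x ∈ U, f (p, x) = x} := by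
  rw [isOpen_iff_mem_nhds]
  rintro p0 ⟨hp0, x0, hx0, hfx⟩
  obtain ⟨r, hr, hball⟩ := Metric.nhds_basis_closedBall.mem_iff.1 (hU.mem_nhds hx0)
  have hc : ContinuousAt f (p0, x0) :=
    hf.continuousAt ((hP.prod hU).mem_nhds ⟨hp0, hx0⟩)
  have hc2 : ContinuousAt (fun p => f (p, x0)) p0 :=
    ContinuousAt.comp (f := fun p => (p, x0)) hc (by fun_prop)
  have h1 : ∀ᶠ p in 𝓝 p0, f (p, x0) ∈ Metric.ball (f (p0, x0)) ((1 - θ) * r) :=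
    hc2 (Metric.ball_mem_nhds _ (by have := sub_pos.2 hθ₁; positivity))
  filter_upwards [h1, hP.mem_nhds hp0] with p hp hpP
  refine ⟨hpP, ?_⟩
  rw [hfx, mem_ball, dist_eq_norm] at hp
  have hmaps : MapsTo (fun x => f (p, x)) (closedBall x0 r) (closedBall x0 r) := by
    intro x hx
    have h2 := hcontr p hpP x (hball hx) x0 hx0
    rw [mem_closedBall, dist_eq_norm] at hx ⊢
    have h3 : ‖f (p, x) - x0‖ ≤ ‖f (p, x) - f (p, x0)‖ + ‖f (p, x0) - x0‖ :=
      norm_sub_le_norm_sub_add_norm_sub _ _ _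
    have h4 := mul_le_mul_of_nonneg_left hx hθ₀
    simp only
    linarith
  have hcw : ContractingWith ⟨θ, hθ₀⟩ (hmaps.restrict _ _ _) := by
    refine ⟨by exact_mod_cast hθ₁, ?_⟩
    refine LipschitzWith.of_dist_le_mul ?_
    rintro ⟨x, hx⟩ ⟨y, hy⟩
    have := hcontr p hpP x (hball hx) y (hball hy)
    rw [← dist_eq_norm, ← dist_eq_norm] at this
    exact this
  obtain ⟨y, hy, hfy, -⟩ := hcw.exists_fixedPoint' Metric.isClosed_closedBall.isComplete
    hmaps (x := x0) (mem_closedBall_self hr.le) (edist_ne_top _ _)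
  exact ⟨y, hball hy, hfy⟩

theorem aux_deriv
    {E F : Type*}
    [NormedAddCommGroup E] [NormedSpace ℝ E]
    [NormedAddCommGroup F] [NormedSpace ℝ F] [CompleteSpace F]
    {P Q : Set E} {U : Set F} (hP : IsOpen P) (hU : IsOpen U) (hQ : IsOpen Q) (hQP : Q ⊆ P)
    (f : E × F → F) (hf : ContDiffOn ℝ (⊤ : ℕ∞) f (P ×ˢ U))
    (θ : ℝ) (hθ₀ : 0 ≤ θ) (hθ₁ : θ < 1)
    (hcontr : ∀ p ∈ P, ∀ x ∈ U, ∀ y ∈ U, ‖f (p, x) - f (p, y)‖ ≤ θ * ‖x - y‖)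
    (φ : E → F) (hφU : ∀ p ∈ Q, φ p ∈ U) (hφ : ∀ p ∈ Q, f (p, φ p) = φ p)
    (p0 : E) (hp0 : p0 ∈ Q) :
    IsUnit (1 - (fderiv ℝ f (p0, φ p0)).comp (ContinuousLinearMap.inr ℝ E F)) ∧
    HasFDerivAt φ ((Ring.inverse (1 - (fderiv ℝ f (p0, φ p0)).comp
        (ContinuousLinearMap.inr ℝ E F))).comp
        ((fderiv ℝ f (p0, φ p0)).comp (ContinuousLinearMap.inl ℝ E F))) p0 := by
  have hp0P := hQP hp0
  have hx0 := hφU p0 hp0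
  have hd : HasFDerivAt f (fderiv ℝ f (p0, φ p0)) (p0, φ p0) :=
    ((hf.contDiffAt ((hP.prod hU).mem_nhds ⟨hp0P, hx0⟩)).differentiableAt
      (by simp)).hasFDerivAt
  set D := fderiv ℝ f (p0, φ p0) with hD
  set D1 := D.comp (ContinuousLinearMap.inl ℝ E F) with hD1
  set D2 := D.comp (ContinuousLinearMap.inr ℝ E F) with hD2
  have hd1 : HasFDerivAt (fun p => f (p, φ p0)) D1 p0 :=
    HasFDerivAt.comp (f := fun p => (p, φ p0)) p0 hd (hasFDerivAt_prodMk_left p0 (φ p0))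
  have hd2 : HasFDerivAt (fun x => f (p0, x)) D2 (φ p0) :=
    HasFDerivAt.comp (f := fun x => (p0, x)) (φ p0) hd (hasFDerivAt_prodMk_right p0 (φ p0))
  have hn : ‖D2‖ ≤ θ := by
    refine hd2.le_of_lip' hθ₀ ?_
    filter_upwards [hU.mem_nhds hx0] with x hx
    exact hcontr p0 hp0P x hx _ hx0
  have hunit : IsUnit (1 - D2) := (Units.oneSub D2 (hn.trans_lt hθ₁)).isUnit
  refine ⟨hunit, ?_⟩
  have hlip : (fun p => φ p - φ p0) =O[𝓝 p0] fun p => p - p0 := by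
    refine Asymptotics.IsBigO.trans ?_ hd1.isBigO_sub
    refine Asymptotics.IsBigO.of_bound (1 - θ)⁻¹ ?_
    filter_upwards [hQ.mem_nhds hp0] with p hp
    rw [inv_mul_eq_div, le_div_iff₀ (sub_pos.2 hθ₁)]
    have h1 := hcontr p (hQP hp) _ (hφU p hp) _ hx0
    have h2 : ‖f (p, φ p) - f (p0, φ p0)‖ ≤
      ‖f (p, φ p) - f (p, φ p0)‖ + ‖f (p, φ p0) - f (p0, φ p0)‖ :=
        norm_sub_le_norm_sub_add_norm_sub _ _ _
    rw [hφ p hp] at h1 h2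
    nth_rw 1 [hφ p0 hp0] at h2
    linarith
  have hcont : Tendsto φ (𝓝 p0) (𝓝 (φ p0)) := by
    have h1 : Tendsto (fun p => p - p0) (𝓝 p0) (𝓝 0) := by
      have : ContinuousAt (fun p => p - p0) p0 := by fun_prop
      simpa [ContinuousAt] using this
    have := hlip.trans_tendsto h1
    exact tendsto_sub_nhds_zero_iff.1 this
  have ht : Tendsto (fun p => (p, φ p)) (𝓝 p0) (𝓝 (p0, φ p0)) :=
    tendsto_id.prodMk_nhds hcont
  have ho := hd.isLittleO.comp_tendsto ht
  have ho2 : (fun p => f (p, φ p) - f (p0, φ p0) - D (p - p0, φ p - φ p0))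
      =o[𝓝 p0] fun p => p - p0 := by
    refine Asymptotics.IsLittleO.trans_isBigO ho ?_
    exact (Asymptotics.isBigO_refl _ _).prod_left hlip
  have ho3 := ((Ring.inverse (1 - D2)).isBigO_comp _ (𝓝 p0)).trans_isLittleO ho2
  refine HasFDerivAt.of_isLittleO (ho3.congr' ?_ EventuallyEq.rfl)
  filter_upwards [hQ.mem_nhds hp0] with p hp
  have hDs : D (p - p0, φ p - φ p0) = D1 (p - p0) + D2 (φ p - φ p0) := by
    simp [hD1, hD2, ← map_add]
  have hinv : ∀ v, (Ring.inverse (1 - D2)) (v - D2 v) = v := fun v => by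
    have := congrArg (fun T : F →L[ℝ] F => T v) (Ring.inverse_mul_cancel _ hunit)
    simpa using this
  rw [hφ p hp, hφ p0 hp0, hDs, add_comm, ← sub_sub, map_sub, hinv]
  rfl

/-- **Parameter-dependence of fixed points (smooth real case).**  Let `E` be a real
normed vector space, `F` a real Banach space, `P ⊆ E` and `U ⊆ F` open, and
`f : P × U → F` a `C^∞` map (in the Fréchet sense) such that `(f (p, ·))_{p ∈ P}` is
a uniform family of contractions with constant `θ < 1`.  Then
`Q := {p ∈ P : f (p, ·) has a fixed point in U}` is open, the fixed point `x_p` is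
unique for each `p ∈ Q`, and `p ↦ x_p` is `C^∞` on `Q`. -/
theorem fixed_points_depend_smoothly_on_parameters_real
    {E F : Type*}
    [NormedAddCommGroup E] [NormedSpace ℝ E]
    [NormedAddCommGroup F] [NormedSpace ℝ F] [CompleteSpace F]
    {P : Set E} {U : Set F} (hP : IsOpen P) (hU : IsOpen U)
    (f : E × F → F) (hf : ContDiffOn ℝ (⊤ : ℕ∞) f (P ×ˢ U))
    (θ : ℝ) (hθ₀ : 0 ≤ θ) (hθ₁ : θ < 1)
    (hcontr : ∀ p ∈ P, ∀ x ∈ U, ∀ y ∈ U, ‖f (p, x) - f (p, y)‖ ≤ θ * ‖x - y‖) :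
    IsOpen {p ∈ P | ∃ x ∈ U, f (p, x) = x} ∧
    (∀ p ∈ P, ∀ x ∈ U, ∀ y ∈ U, f (p, x) = x → f (p, y) = y → x = y) ∧
    ∃ φ : E → F, ContDiffOn ℝ (⊤ : ℕ∞) φ {p ∈ P | ∃ x ∈ U, f (p, x) = x} ∧
      ∀ p ∈ {p ∈ P | ∃ x ∈ U, f (p, x) = x}, φ p ∈ U ∧ f (p, φ p) = φ p := by
  have hopen := aux_open hP hU f hf.continuousOn θ hθ₀ hθ₁ hcontr
  refine ⟨hopen, ?_, ?_⟩
  · intro p hp x hx y hy h1 h2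
    have h := hcontr p hp x hx y hy
    rw [h1, h2] at h
    have h3 : ‖x - y‖ = 0 := by
      nlinarith [norm_nonneg (x - y)]
    exact sub_eq_zero.1 (norm_eq_zero.1 h3)
  · set Q := {p ∈ P | ∃ x ∈ U, f (p, x) = x} with hQdef
    have hex : ∀ p, ∃ x, p ∈ Q → x ∈ U ∧ f (p, x) = x := by
      intro p
      by_cases h : p ∈ Q
      · obtain ⟨-, x, hx⟩ := h
        exact ⟨x, fun _ => hx⟩
      · exact ⟨0, fun h' => absurd h' h⟩
    choose φ hφ using hex
    refine ⟨φ, ?_, hφ⟩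
    have hQP : Q ⊆ P := fun p hp => hp.1
    have key := aux_deriv hP hU hopen hQP f hf θ hθ₀ hθ₁ hcontr φ
      (fun p hp => (hφ p hp).1) (fun p hp => (hφ p hp).2)
    have hdiff : DifferentiableOn ℝ φ Q := fun p hp =>
      (key p hp).2.differentiableAt.differentiableWithinAt
    have hdf : ContDiffOn ℝ (⊤ : ℕ∞) (fderiv ℝ f) (P ×ˢ U) :=
      hf.fderiv_of_isOpen (hP.prod hU) (by simp)
    have hn : ∀ n : ℕ, ContDiffOn ℝ n φ Q := by
      intro n
      induction n with
      | zero => exact contDiffOn_zero.2 hdiff.continuousOn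
      | succ n ih =>
        push_cast
        rw [contDiffOn_succ_iff_fderiv_of_isOpen hopen]
        refine ⟨hdiff, by simp, ?_⟩
        have hg : ContDiffOn ℝ n (fun p => fderiv ℝ f (p, φ p)) Q :=
          ContDiffOn.comp (hdf.of_le (by exact_mod_cast le_top)) (contDiffOn_id.prodMk ih)
            (fun p hp => ⟨hQP hp, (hφ p hp).1⟩)
        have hg2 : ContDiffOn ℝ n (fun p => Ring.inverse (1 - (fderiv ℝ f (p, φ p)).comp
            (ContinuousLinearMap.inr ℝ E F))) Q := by
          intro p hp
          obtain ⟨u, hu⟩ := (key p hp).1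
          have h1 : ContDiffAt ℝ n Ring.inverse (1 - (fderiv ℝ f (p, φ p)).comp
            (ContinuousLinearMap.inr ℝ E F)) := hu ▸ contDiffAt_ringInverse ℝ u
          exact ContDiffAt.comp_contDiffWithinAt p h1
            ((contDiffOn_const.sub (hg.clm_comp contDiffOn_const)) p hp)
        refine (hg2.clm_comp (hg.clm_comp
          (contDiffOn_const (c := ContinuousLinearMap.inl ℝ E F)))).congr ?_
        intro p hp
        exact (key p hp).2.fderiv
    exact contDiffOn_infty.2 hn
end

section
/- Inverse Function Theorem (C² case): Let E be a Banach space over a valued field 𝕜, U ⊆ E open, and f : U → E a C² map with witnessing continuous map f^{[1]} : U^{[1]} → E. Suppose x ∈ U is such that there is a bicontinuous 𝕜-linear automorphism A of E with A(y) = f^{[1]}(x,y,0) for all y ∈ E (i.e. f′(x) ∈ GL(E)). Then there exists an open neighbourhood V ⊆ U of x such that f(V) is open in E, f is injective on V, and the inverse map g : f(V) → E of f|_V is a C² map on the open set f(V); in particular f|_V : V → f(V) is a C²-diffeomorphism. -/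
open Set Metric Filter Topology

/-- For an open set `U ⊆ E`, the extended domain
`U^{[1]} = {(x,y,t) : x ∈ U, x + t·y ∈ U}` of the difference quotient map. -/
def UOne (𝕜 : Type*) {E : Type*} [Field 𝕜] [AddCommGroup E] [Module 𝕜 E]
    (U : Set E) : Set (E × E × 𝕜) :=
  {p | p.1 ∈ U ∧ p.1 + p.2.2 • p.2.1 ∈ U}

/-- `g : U^{[1]} → F` extends the directional difference quotients of `f`:
`g (x,y,t) = t⁻¹ • (f (x + t·y) - f x)` whenever `t ≠ 0`. -/
def IsDiffQuotOn (𝕜 : Type*) {E F : Type*} [Field 𝕜] [AddCommGroup E] [Module 𝕜 E]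
    [AddCommGroup F] [Module 𝕜 F] (U : Set E) (f : E → F) (g : E × E × 𝕜 → F) : Prop :=
  ∀ p ∈ UOne 𝕜 U, p.2.2 ≠ 0 → g p = (p.2.2)⁻¹ • (f (p.1 + p.2.2 • p.2.1) - f p.1)

/-- `f` is `C¹` on the open set `U` in the sense of extended difference quotients:
`f` is continuous on `U` and there is a continuous map `f^{[1]} : U^{[1]} → F`
extending the directional difference quotients of `f`. -/
def IsC1On (𝕜 : Type*) {E F : Type*} [Field 𝕜] [TopologicalSpace 𝕜]
    [AddCommGroup E] [Module 𝕜 E] [TopologicalSpace E]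
    [AddCommGroup F] [Module 𝕜 F] [TopologicalSpace F]
    (U : Set E) (f : E → F) : Prop :=
  ContinuousOn f U ∧
    ∃ g : E × E × 𝕜 → F, ContinuousOn g (UOne 𝕜 U) ∧ IsDiffQuotOn 𝕜 U f g

/-- `f` is `C²` on the open set `U`: it is `C¹` with a witness `f^{[1]}` which is
itself `C¹` on the open set `U^{[1]}`. -/
def IsC2On (𝕜 : Type*) {E F : Type*} [Field 𝕜] [TopologicalSpace 𝕜]
    [AddCommGroup E] [Module 𝕜 E] [TopologicalSpace E]
    [AddCommGroup F] [Module 𝕜 F] [TopologicalSpace F]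
    (U : Set E) (f : E → F) : Prop :=
  ContinuousOn f U ∧
    ∃ g : E × E × 𝕜 → F, ContinuousOn g (UOne 𝕜 U) ∧ IsDiffQuotOn 𝕜 U f g ∧
      IsC1On 𝕜 (UOne 𝕜 U) g


lemma isOpen_UOne {𝕜 E : Type*} [NontriviallyNormedField 𝕜]
    [NormedAddCommGroup E] [NormedSpace 𝕜 E] {U : Set E} (hU : IsOpen U) :
    IsOpen (UOne 𝕜 U) := by
  have h1 : Continuous (fun p : E × E × 𝕜 => p.1) := by fun_prop
  have h2 : Continuous (fun p : E × E × 𝕜 => p.1 + p.2.2 • p.2.1) := by fun_prop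
  exact (hU.preimage h1).inter (hU.preimage h2)

/-- A `C¹` map is locally Lipschitz. -/
lemma c1_lip {𝕜 E F : Type*} [NontriviallyNormedField 𝕜]
    [NormedAddCommGroup E] [NormedSpace 𝕜 E] [NormedAddCommGroup F] [NormedSpace 𝕜 F]
    {U : Set E} (hU : IsOpen U) {f : E → F} {g : E × E × 𝕜 → F}
    (hgc : ContinuousOn g (UOne 𝕜 U)) (hgq : IsDiffQuotOn 𝕜 U f g) {x : E} (hx : x ∈ U) :
    ∃ L > 0, ∃ r > 0, ∀ a b : E, ‖a - x‖ < r → ‖b - x‖ < r → ‖f b - f a‖ ≤ L * ‖b - a‖ := by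
  obtain ⟨c, hc⟩ := NormedField.exists_one_lt_norm 𝕜
  have hO := isOpen_UOne (𝕜 := 𝕜) hU
  have hP : ((x, 0, 0) : E × E × 𝕜) ∈ UOne 𝕜 U := by simp [UOne, hx]
  have hcont := hgc.continuousAt (hO.mem_nhds hP)
  have ev : ∀ᶠ P in 𝓝 ((x, 0, 0) : E × E × 𝕜), P ∈ UOne 𝕜 U ∧ ‖g P‖ < ‖g (x, 0, 0)‖ + 1 :=
    (hO.eventually_mem hP).and (hcont.norm.eventually_lt_const (by linarith))
  obtain ⟨r, hr, H⟩ := Metric.eventually_nhds_iff.1 ev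
  set M := ‖g (x, 0, 0)‖ + 1
  have hM : 0 < M := by positivity
  have hc0 : 0 < ‖c‖ := by linarith
  set C := r⁻¹ * ‖c‖ with hC
  have hCp : 0 < C := by positivity
  refine ⟨C * M, by positivity, min r (r / (2 * C)), by positivity, fun a b ha hb => ?_⟩
  rcases eq_or_ne b a with rfl | hab
  · simp
  obtain ⟨d, hd, h1, -, h2⟩ := rescale_to_shell hc hr (sub_ne_zero.2 hab)
  have hba : ‖b - a‖ < r / C := by
    have : ‖b - a‖ ≤ ‖b - x‖ + ‖a - x‖ := by
      simpa using norm_sub_le (b - x) (a - x)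
    have e : r / C = r / (2 * C) + r / (2 * C) := by field_simp; ring
    rw [e]
    linarith [ha.trans_le (min_le_right _ _), hb.trans_le (min_le_right _ _)]
  have hdn : ‖d⁻¹‖ < r := by
    rw [norm_inv]
    refine h2.trans_lt ?_
    rw [lt_div_iff₀ hCp] at hba
    linarith
  have key := H (y := (a, d • (b - a), d⁻¹)) (by
    rw [dist_eq_norm]
    simp only [Prod.mk_sub_mk, sub_zero, Prod.norm_def]
    exact max_lt (ha.trans_le (min_le_left _ _)) (max_lt h1 hdn))
  have e := hgq _ key.1 (inv_ne_zero hd)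
  simp only [smul_smul, inv_mul_cancel₀ hd, one_smul, inv_inv, add_sub_cancel] at e
  have e2 : f b - f a = d⁻¹ • g (a, d • (b - a), d⁻¹) := by
    rw [e, smul_smul, inv_mul_cancel₀ hd, one_smul]
  rw [e2, norm_smul, norm_inv]
  calc ‖d‖⁻¹ * _ ≤ (C * ‖b - a‖) * M := by gcongr; exact key.2.le
    _ = _ := by ring

/-- A `C²` map is strictly Fréchet differentiable. -/
lemma c2_strict {𝕜 E F : Type*} [NontriviallyNormedField 𝕜]
    [NormedAddCommGroup E] [NormedSpace 𝕜 E] [NormedAddCommGroup F] [NormedSpace 𝕜 F]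
    {U : Set E} (hU : IsOpen U) {f : E → F} {g : E × E × 𝕜 → F}
    (hgc : ContinuousOn g (UOne 𝕜 U)) (hgq : IsDiffQuotOn 𝕜 U f g)
    (hgC1 : IsC1On 𝕜 (UOne 𝕜 U) g) {x : E} (hx : x ∈ U) :
    ∃ D : E →L[𝕜] F, HasStrictFDerivAt f D x ∧ ∀ v, D v = g (x, v, 0) := by
  obtain ⟨c, hc⟩ := NormedField.exists_one_lt_norm 𝕜
  have hc0 : 0 < ‖c‖ := by linarith
  have hO := isOpen_UOne (𝕜 := 𝕜) hU
  have hmem : ∀ v, ((x, v, 0) : E × E × 𝕜) ∈ UOne 𝕜 U := fun v => by simp [UOne, hx]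
  have hcat : ∀ v, ContinuousAt g (x, v, 0) := fun v => hgc.continuousAt (hO.mem_nhds (hmem v))
  -- limits along curves
  have lim : ∀ (v : E) (y : 𝕜 → E) (w : E) (s : 𝕜 → 𝕜), Continuous y → Continuous s → y 0 = x →
      s 0 = 0 → Tendsto (fun t => g (y t, w, s t)) (𝓝[≠] 0) (𝓝 (g (x, w, 0))) := by
    intro v y w s hy hs hy0 hs0
    have h1 : Tendsto (fun t => ((y t, w, s t) : E × E × 𝕜)) (𝓝 0) (𝓝 (x, w, 0)) := by
      have : Continuous (fun t => ((y t, w, s t) : E × E × 𝕜)) := by fun_prop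
      simpa [hy0, hs0] using this.tendsto 0
    exact ((hcat w).tendsto.comp h1).mono_left nhdsWithin_le_nhds
  have evm : ∀ (y : 𝕜 → E), Continuous y → y 0 = x → ∀ᶠ t in 𝓝[≠] (0 : 𝕜), y t ∈ U := by
    intro y hy hy0
    exact nhdsWithin_le_nhds (hy.continuousAt.preimage_mem_nhds (hU.mem_nhds (by rwa [hy0])))
  have hadd : ∀ v w, g (x, v + w, 0) = g (x, v, 0) + g (x, w, 0) := by
    intro v w
    have l1 := lim 0 (fun _ => x) (v + w) id (by fun_prop) continuous_id rfl rfl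
    have l2 := (lim 0 (fun _ => x) v id (by fun_prop) continuous_id rfl rfl).add
      (lim 0 (fun t => x + t • v) w id (by fun_prop) continuous_id (by simp) rfl)
    refine tendsto_nhds_unique (l1.congr' ?_) l2
    filter_upwards [evm (fun t => x + t • v) (by fun_prop) (by simp),
      evm (fun t => x + t • (v + w)) (by fun_prop) (by simp), self_mem_nhdsWithin] with t h1 h2 ht
    have h2' : x + t • v + t • w ∈ U := by rwa [add_assoc, ← smul_add]
    simp only [id]
    rw [hgq (x, v + w, t) ⟨hx, h2⟩ ht, hgq (x, v, t) ⟨hx, h1⟩ ht,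
      hgq (x + t • v, w, t) ⟨h1, h2'⟩ ht, ← smul_add, smul_add, ← add_assoc]
    congr 1
    abel
  have hsmul : ∀ (k : 𝕜) v, g (x, k • v, 0) = k • g (x, v, 0) := by
    intro k v
    rcases eq_or_ne k 0 with rfl | hk
    · have := hadd 0 0
      simp at this
      simp [this]
    have l1 := lim 0 (fun _ => x) (k • v) id (by fun_prop) continuous_id rfl rfl
    have l2 := (lim 0 (fun _ => x) v (fun t => t * k) (by fun_prop) (by fun_prop) rfl
      (by simp)).const_smul k
    refine tendsto_nhds_unique (l1.congr' ?_) l2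
    filter_upwards [evm (fun t => x + t • k • v) (by fun_prop) (by simp), self_mem_nhdsWithin]
      with t h1 ht
    simp only [id]
    rw [hgq (x, k • v, t) ⟨hx, h1⟩ ht, hgq (x, v, t * k) ⟨hx, by simpa [mul_smul] using h1⟩
      (mul_ne_zero ht hk)]
    simp only [mul_smul]
    rw [smul_smul k]
    congr 1
    have ht' : t ≠ 0 := ht
    field_simp
  let D : E →L[𝕜] F :=
    { toFun := fun v => g (x, v, 0)
      map_add' := hadd
      map_smul' := hsmul
      cont := continuous_iff_continuousAt.2 fun v =>
        ContinuousAt.comp (f := fun v => ((x, v, 0) : E × E × 𝕜)) (hcat v) (by fun_prop) }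
  have hD : ∀ v, D v = g (x, v, 0) := fun v => rfl
  refine ⟨D, ?_, hD⟩
  obtain ⟨-, h, hhc, hhq⟩ := hgC1
  obtain ⟨L, hL, r, hr, H⟩ := c1_lip hO hhc hhq (hmem 0)
  set C := r⁻¹ * ‖c‖ with hC
  have hCp : 0 < C := by positivity
  rw [hasStrictFDerivAt_iff_isLittleO, Asymptotics.isLittleO_iff]
  intro ε hε
  have ev1 : ∀ᶠ p : E × E in 𝓝 (x, x), p.2 ∈ U ∧ p.1 ∈ U :=
    ((continuous_snd.tendsto (x, x)).eventually (hU.eventually_mem hx)).and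
      ((continuous_fst.tendsto (x, x)).eventually (hU.eventually_mem hx))
  have small : ∀ (φ : E × E → E), Continuous φ → φ (x, x) = 0 → ∀ δ > 0,
      ∀ᶠ p : E × E in 𝓝 (x, x), ‖φ p‖ < δ := by
    intro φ hφ h0 δ hδ
    exact hφ.norm.continuousAt.eventually_lt_const (by simpa [h0] using hδ)
  set δ := min r (ε / (C * L)) with hδ
  have hδp : 0 < δ := by positivity
  filter_upwards [ev1, small (fun p => p.2 - x) (by fun_prop) (by simp) δ hδp,
    small (fun p => p.1 - p.2) (by fun_prop) (by simp) (δ / C) (by positivity)] with p hp h1 h2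
  obtain ⟨b, a⟩ := p
  simp only at hp h1 h2 ⊢
  rcases eq_or_ne b a with rfl | hab
  · simp
  obtain ⟨d, hd, h3, -, h4⟩ := rescale_to_shell hc hr (sub_ne_zero.2 hab)
  set v := d • (b - a) with hv
  have hbv : b - a = d⁻¹ • v := by rw [hv, smul_smul, inv_mul_cancel₀ hd, one_smul]
  have hdn : ‖d⁻¹‖ < δ := by
    rw [norm_inv]
    refine h4.trans_lt ?_
    rw [lt_div_iff₀ hCp] at h2
    linarith
  have hab' : a + d⁻¹ • v = b := by rw [← hbv]; abel
  have e := hgq (a, v, d⁻¹) ⟨hp.1, by simpa [hab'] using hp.2⟩ (inv_ne_zero hd)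
  simp only [hab', inv_inv] at e
  have e2 : f b - f a - D (b - a) = d⁻¹ • (g (a, v, d⁻¹) - g (x, v, 0)) := by
    rw [e, ← hD, smul_sub, ← map_smul, ← hbv, smul_smul, inv_mul_cancel₀ hd, one_smul]
  have k := H (x, v, 0) (a, v, d⁻¹)
    (by simpa [Prod.norm_def, hr] using h3)
    (by
      simp only [Prod.mk_sub_mk, sub_zero, Prod.norm_def]
      exact max_lt (h1.trans_le (min_le_left _ _))
        (max_lt h3 (hdn.trans_le (min_le_left _ _))))
  have k2 : ‖((a, v, d⁻¹) : E × E × 𝕜) - (x, v, 0)‖ ≤ ε / (C * L) := by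
    simp only [Prod.mk_sub_mk, sub_zero, Prod.norm_def, sub_self, norm_zero]
    refine max_le (h1.le.trans (min_le_right _ _)) (max_le (by positivity)
        (hdn.le.trans (min_le_right _ _)))
  rw [e2, norm_smul, norm_inv]
  calc ‖d‖⁻¹ * _ ≤ (C * ‖b - a‖) * (L * (ε / (C * L))) := by
        gcongr
        exact k.trans (by gcongr)
    _ = _ := by field_simp

/-- closeness of nearby derivatives at a point of strict differentiability -/
lemma strict_fderiv_cont {𝕜 E F : Type*} [NontriviallyNormedField 𝕜]
    [NormedAddCommGroup E] [NormedSpace 𝕜 E] [NormedAddCommGroup F] [NormedSpace 𝕜 F]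
    {U : Set E} (hU : IsOpen U) {f : E → F} 
    (hf : ∀ y ∈ U, HasStrictFDerivAt f (fderiv 𝕜 f y) y) :
    ContinuousOn (fderiv 𝕜 f) U := by
  intro x hx
  refine ContinuousAt.continuousWithinAt ?_
  rw [Metric.continuousAt_iff']
  intro ε hε
  have h1 := (hasStrictFDerivAt_iff_isLittleO.1 (hf x hx))
  rw [Asymptotics.isLittleO_iff] at h1
  have h2 := h1 (half_pos hε)
  have h4 : ∀ᶠ y in 𝓝 x, ∀ᶠ z in 𝓝 y, 
      ‖f z - f y - fderiv 𝕜 f x (z - y)‖ ≤ ε / 2 * ‖z - y‖ := by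
    have := h2.eventually_nhds
    have t : Tendsto (fun y : E => (y, y)) (𝓝 x) (𝓝 (x, x)) :=
      (continuous_id.prodMk continuous_id).tendsto x
    filter_upwards [t.eventually this] with y hy
    have t' : Tendsto (fun z : E => (z, y)) (𝓝 y) (𝓝 (y, y)) :=
      (continuous_id.prodMk continuous_const).tendsto y
    exact t'.eventually hy
  filter_upwards [h4, hU.mem_nhds hx] with y hy hyU
  rw [dist_eq_norm]
  have hd : HasFDerivAt (fun z => f z - fderiv 𝕜 f x z) (fderiv 𝕜 f y - fderiv 𝕜 f x) y :=
    (hf y hyU).hasFDerivAt.sub (fderiv 𝕜 f x).hasFDerivAt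
  refine (hd.le_of_lip' (half_pos hε).le ?_).trans_lt (half_lt_self hε)
  filter_upwards [hy] with z hz
  convert hz using 2
  simp only [map_sub]
  abel

/-- a strictly differentiable map is `C¹`, with the explicit extension. -/
lemma strict_quot_cont {𝕜 E F : Type*} [NontriviallyNormedField 𝕜]
    [NormedAddCommGroup E] [NormedSpace 𝕜 E] [NormedAddCommGroup F] [NormedSpace 𝕜 F]
    {U : Set E} (hU : IsOpen U) {f : E → F} 
    (hf : ∀ y ∈ U, HasStrictFDerivAt f (fderiv 𝕜 f y) y) {G : E × E × 𝕜 → F}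
    (hG0 : ∀ z w, G (z, w, 0) = fderiv 𝕜 f z w)
    (hG : ∀ z w t, t ≠ 0 → G (z, w, t) = t⁻¹ • (f (z + t • w) - f z)) :
    ContinuousOn G (UOne 𝕜 U) := by
  have hO := isOpen_UOne (𝕜 := 𝕜) hU
  have hfc : ∀ y ∈ U, ContinuousAt f y := fun y hy => (hf y hy).continuousAt
  rintro ⟨z, w, t⟩ hp
  refine ContinuousAt.continuousWithinAt ?_
  rcases eq_or_ne t 0 with rfl | ht
  swap
  · have h1 : ContinuousAt (fun p : E × E × 𝕜 => p.2.2⁻¹ • (f (p.1 + p.2.2 • p.2.1) - f p.1))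
        (z, w, t) := by
      have i : ContinuousAt (fun p : E × E × 𝕜 => p.2.2⁻¹) (z, w, t) :=
        ContinuousAt.inv₀ (by fun_prop) ht
      have j : ContinuousAt (fun p : E × E × 𝕜 => f (p.1 + p.2.2 • p.2.1)) (z, w, t) :=
        ContinuousAt.comp (f := fun p : E × E × 𝕜 => p.1 + p.2.2 • p.2.1) (hfc _ hp.2)
          (by fun_prop)
      have k : ContinuousAt (fun p : E × E × 𝕜 => f p.1) (z, w, t) :=
        ContinuousAt.comp (f := fun p : E × E × 𝕜 => p.1) (hfc _ hp.1) (by fun_prop)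
      exact i.smul (j.sub k)
    refine h1.congr ?_
    have : ∀ᶠ p : E × E × 𝕜 in 𝓝 (z, w, t), p.2.2 ≠ 0 :=
      ContinuousAt.eventually_ne (by fun_prop) ht
    filter_upwards [this] with p hp
    exact (hG p.1 p.2.1 p.2.2 hp).symm
  have hz : z ∈ U := hp.1
  have hc2 : ContinuousAt (fun p : E × E × 𝕜 => fderiv 𝕜 f p.1 p.2.1) (z, w, 0) := by
    have h1 : ContinuousAt (fun p : E × E × 𝕜 => fderiv 𝕜 f p.1) (z, w, 0) :=
      ContinuousAt.comp (f := fun p : E × E × 𝕜 => p.1)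
        ((strict_fderiv_cont hU hf).continuousAt (hU.mem_nhds hz)) (by fun_prop)
    exact h1.clm_apply (by fun_prop)
  have hdiff : Tendsto (fun p => G p - fderiv 𝕜 f p.1 p.2.1) (𝓝 (z, w, 0)) (𝓝 0) := by
    rw [NormedAddGroup.tendsto_nhds_zero]
    intro ε hε
    set B := ‖w‖ + 1 with hB
    have hBp : 0 < B := by positivity
    set η := ε / (2 * B) with hη
    have hηp : 0 < η := by positivity
    have h1 := hasStrictFDerivAt_iff_isLittleO.1 (hf z hz)
    rw [Asymptotics.isLittleO_iff] at h1
    have h2 := h1 (c := η / 2) (by positivity)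
    have tt : Tendsto (fun p : E × E × 𝕜 => (p.1 + p.2.2 • p.2.1, p.1)) (𝓝 (z, w, 0))
        (𝓝 (z, z)) := by
      have : Continuous (fun p : E × E × 𝕜 => (p.1 + p.2.2 • p.2.1, p.1)) := by fun_prop
      simpa using this.tendsto (z, w, 0)
    have t1 : Tendsto (fun p : E × E × 𝕜 => p.1) (𝓝 (z, w, 0)) (𝓝 z) :=
      continuous_fst.tendsto _
    have h3 := t1.eventually (Metric.continuousAt_iff'.1
      ((strict_fderiv_cont hU hf).continuousAt (hU.mem_nhds hz)) (η / 2) (by positivity))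
    have h4 : ∀ᶠ p : E × E × 𝕜 in 𝓝 (z, w, 0), ‖p.2.1‖ < B := by
      have : Continuous (fun p : E × E × 𝕜 => ‖p.2.1‖) := by fun_prop
      exact this.continuousAt.eventually_lt_const (by simp [hB])
    filter_upwards [tt.eventually h2, h3, h4] with p k2 k3 k4
    obtain ⟨a, v, t⟩ := p
    simp only at k2 k3 k4 ⊢
    rcases eq_or_ne t 0 with rfl | ht
    · simpa [hG0] using hε
    rw [hG _ _ _ ht]
    rw [add_sub_cancel_left] at k2
    rw [dist_eq_norm] at k3
    have e : t⁻¹ • (f (a + t • v) - f a) - fderiv 𝕜 f a v =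
        t⁻¹ • (f (a + t • v) - f a - fderiv 𝕜 f z (t • v)) - (fderiv 𝕜 f a - fderiv 𝕜 f z) v := by
      simp only [map_smul, smul_sub, smul_smul, inv_mul_cancel₀ ht, one_smul,
        sub_apply]
      abel
    have htp : 0 < ‖t‖ := norm_pos_iff.2 ht
    have n1 : ‖t⁻¹ • (f (a + t • v) - f a - fderiv 𝕜 f z (t • v))‖ ≤ η / 2 * ‖v‖ := by
      rw [norm_smul, norm_inv, inv_mul_le_iff₀ htp]
      rw [norm_smul] at k2
      linarith
    have n2 : ‖(fderiv 𝕜 f a - fderiv 𝕜 f z) v‖ ≤ η / 2 * ‖v‖ :=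
      ContinuousLinearMap.le_of_opNorm_le _ k3.le _
    rw [e]
    calc _ ≤ _ := norm_sub_le _ _
      _ ≤ η / 2 * ‖v‖ + η / 2 * ‖v‖ := add_le_add n1 n2
      _ = η * ‖v‖ := by ring
      _ ≤ η * B := by gcongr
      _ < ε := by rw [hη]; field_simp; linarith
  have : ContinuousAt (fun p => (G p - fderiv 𝕜 f p.1 p.2.1) + fderiv 𝕜 f p.1 p.2.1)
      (z, w, 0) := by
    have := hdiff.add hc2.tendsto
    unfold ContinuousAt
    simpa [hG0] using this
  simpa using this

/-- The extended difference quotient of the inverse map is itself `C¹`. -/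
lemma inv_quot_c1 {𝕜 E : Type*} [NontriviallyNormedField 𝕜]
    [NormedAddCommGroup E] [NormedSpace 𝕜 E]
    {V W : Set E} (hV : IsOpen V) (hW : IsOpen W) {f φ : E → E}
    {g G : E × E × 𝕜 → E} {h : (E × E × 𝕜) × (E × E × 𝕜) × 𝕜 → E}
    (hf : ContinuousOn f V) (hfW : ∀ y ∈ V, f y ∈ W)
    (hφ : ContinuousOn φ W) (hφV : ∀ z ∈ W, φ z ∈ V)
    (hgq : IsDiffQuotOn 𝕜 V f g)
    (hhc : ContinuousOn h (UOne 𝕜 (UOne 𝕜 V))) (hhq : IsDiffQuotOn 𝕜 (UOne 𝕜 V) g h)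
    (hlin : ∀ y ∈ V, ∀ v η (s : 𝕜), g (y, v + s • η, 0) = g (y, v, 0) + s • g (y, η, 0))
    (hGc : ContinuousOn G (UOne 𝕜 W)) (hGq : IsDiffQuotOn 𝕜 W φ G)
    (hgG : ∀ p ∈ UOne 𝕜 W, g (φ p.1, G p, p.2.2) = p.2.1)
    (hGg : ∀ p ∈ UOne 𝕜 V, G (f p.1, g p, p.2.2) = p.2.1) :
    IsC1On 𝕜 (UOne 𝕜 W) G := by
  have hOV := isOpen_UOne (𝕜 := 𝕜) hV
  have hOW := isOpen_UOne (𝕜 := 𝕜) hW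
  have hOOV := isOpen_UOne (𝕜 := 𝕜) hOV
  have hOOW := isOpen_UOne (𝕜 := 𝕜) hOW
  -- `φ` along difference quotients
  have hφG : ∀ p ∈ UOne 𝕜 W, φ p.1 + p.2.2 • G p = φ (p.1 + p.2.2 • p.2.1) := by
    intro p hp
    rcases eq_or_ne p.2.2 0 with h0 | h0
    · simp [h0]
    · rw [hGq p hp h0, smul_smul, mul_inv_cancel₀ h0, one_smul]; abel
  have hmemG : ∀ p ∈ UOne 𝕜 W, (φ p.1, G p, p.2.2) ∈ UOne 𝕜 V := fun p hp =>
    ⟨hφV _ hp.1, by simpa only [hφG p hp] using hφV _ hp.2⟩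
  have hshift : ∀ (y v η : E) (t s : 𝕜), y ∈ V → y + t • v ∈ V → y + t • (v + s • η) ∈ V → s ≠ 0 →
      g (y, v + s • η, t) = g (y, v, t) + s • g (y + t • v, η, s * t) := by
    intro y v η t s h1 h2 h3 hs
    rcases eq_or_ne t 0 with rfl | ht
    · simpa using hlin y h1 v η s
    have e3 : y + t • v + (s * t) • η = y + t • (v + s • η) := by
      rw [smul_add, smul_smul, mul_comm s t, add_assoc]
    rw [hgq (y, v + s • η, t) ⟨h1, h3⟩ ht, hgq (y, v, t) ⟨h1, h2⟩ ht,
      hgq (y + t • v, η, s * t) ⟨h2, by simpa only [e3] using h3⟩ (mul_ne_zero hs ht)]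
    simp only [e3]
    rw [smul_smul, mul_inv, mul_inv_cancel_left₀ hs, ← smul_add]
    congr 1
    abel
  let τ : (E × E × 𝕜) × (E × E × 𝕜) × 𝕜 → 𝕜 := fun P => P.1.2.2 + P.2.2 * P.2.1.2.2
  let y' : (E × E × 𝕜) × (E × E × 𝕜) × 𝕜 → E := fun P => G (P.1.1, P.2.1.1, P.2.2)
  let Y : (E × E × 𝕜) × (E × E × 𝕜) × 𝕜 → E := fun P =>
    φ P.1.1 + P.2.2 • y' P + τ P • G P.1
  let Q : (E × E × 𝕜) × (E × E × 𝕜) × 𝕜 → (E × E × 𝕜) × (E × E × 𝕜) × 𝕜 := fun P =>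
    ((φ P.1.1, G P.1, P.1.2.2), (y' P, 0, P.2.1.2.2), P.2.2)
  let R : (E × E × 𝕜) × (E × E × 𝕜) × 𝕜 → E × E × 𝕜 := fun P =>
    (f (Y P), P.2.1.2.1 - h (Q P), P.2.2 * τ P)
  have hz' : ∀ P ∈ UOne 𝕜 (UOne 𝕜 W), (P.1.1, P.2.1.1, P.2.2) ∈ UOne 𝕜 W := fun P hP =>
    ⟨hP.1.1, hP.2.1⟩
  have hQmem : ∀ P ∈ UOne 𝕜 (UOne 𝕜 W), Y P ∈ V → Q P ∈ UOne 𝕜 (UOne 𝕜 V) := by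
    intro P hP hY
    refine ⟨hmemG _ hP.1, ?_, ?_⟩
    · have := (hmemG _ (hz' P hP)).2
      simpa [Q] using this
    · simpa [Q, Y, τ] using hY
  -- the key identity
  have key : ∀ P ∈ UOne 𝕜 (UOne 𝕜 W), P.2.2 ≠ 0 → Y P ∈ V →
      G (R P) = P.2.2⁻¹ • (G (P.1 + P.2.2 • P.2.1) - G P.1) := by
    intro P hP hs hY
    have hQ := hhq _ (hQmem P hP hY) hs
    set s := P.2.2 with hsdef
    set p1 := P.1 + s • P.2.1 with hp1
    have hp1W : p1 ∈ UOne 𝕜 W := hP.2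
    set η := s⁻¹ • (G p1 - G P.1) with hη
    have hvη : G P.1 + s • η = G p1 := by
      rw [hη, smul_smul, mul_inv_cancel₀ hs, one_smul]; abel
    have hτ : p1.2.2 = τ P := rfl
    set y1 := φ P.1.1 + s • y' P with hy1
    have hy1' : y1 = φ p1.1 := hφG _ (hz' P hP)
    have hYe : Y P = y1 + τ P • G P.1 := rfl
    have m1 : y1 ∈ V := by rw [hy1']; exact hφV _ hp1W.1
    have m3 : y1 + τ P • (G P.1 + s • η) ∈ V := by
      rw [hvη, hy1', ← hτ]; exact (hmemG _ hp1W).2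
    have S := hshift y1 (G P.1) η (τ P) s m1 (hYe ▸ hY) m3 hs
    have g1 : g (y1, G P.1 + s • η, τ P) = P.1.2.1 + s • P.2.1.2.1 := by
      rw [hvη, hy1']; exact hgG _ hp1W
    have g0 : g (φ P.1.1, G P.1, P.1.2.2) = P.1.2.1 := hgG _ hP.1
    have hQ2 : h (Q P) = s⁻¹ • (g (y1, G P.1, τ P) - P.1.2.1) := by
      rw [hQ]
      have e1 : (Q P).1 + (Q P).2.2 • (Q P).2.1 = (y1, G P.1, τ P) := by
        simp [Q, hy1, τ, hsdef]
      rw [e1]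
      show s⁻¹ • (_ - g (φ P.1.1, G P.1, P.1.2.2)) = _
      rw [g0]
    have hω : P.2.1.2.1 - h (Q P) = g (Y P, η, s * τ P) := by
      rw [← hYe, g1] at S
      have : g (y1, G P.1, τ P) - P.1.2.1 = s • (P.2.1.2.1 - g (Y P, η, s * τ P)) := by
        rw [smul_sub, sub_eq_sub_iff_add_eq_add, ← S]; abel
      rw [hQ2, this, smul_smul, inv_mul_cancel₀ hs, one_smul]; abel
    have hm : (Y P, η, s * τ P) ∈ UOne 𝕜 V := by
      refine ⟨hY, ?_⟩
      have : Y P + (s * τ P) • η = y1 + τ P • (G P.1 + s • η) := by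
        rw [mul_comm s, mul_smul, hYe, smul_add, add_assoc]
      simpa only [this] using m3
    have := hGg _ hm
    simp only at this
    show G (f (Y P), P.2.1.2.1 - h (Q P), s * τ P) = η
    rw [hω, this]
  classical
  let H : (E × E × 𝕜) × (E × E × 𝕜) × 𝕜 → E := fun P =>
    if P.2.2 = 0 then G (R P) else P.2.2⁻¹ • (G (P.1 + P.2.2 • P.2.1) - G P.1)
  refine ⟨hGc, H, ?_, fun P hP hs => by simp [H, hs]⟩
  intro P hP
  refine ContinuousAt.continuousWithinAt ?_
  have cG : ∀ p ∈ UOne 𝕜 W, ContinuousAt G p := fun p hp => hGc.continuousAt (hOW.mem_nhds hp)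
  have c1 : ContinuousAt (fun P : (E × E × 𝕜) × (E × E × 𝕜) × 𝕜 => G P.1) P :=
    ContinuousAt.comp (f := fun P : (E × E × 𝕜) × (E × E × 𝕜) × 𝕜 => P.1) (cG _ hP.1)
      (by fun_prop)
  by_cases hs : P.2.2 = 0
  swap
  · have c2 : ContinuousAt (fun P : (E × E × 𝕜) × (E × E × 𝕜) × 𝕜 => G (P.1 + P.2.2 • P.2.1)) P :=
      ContinuousAt.comp (f := fun P : (E × E × 𝕜) × (E × E × 𝕜) × 𝕜 => P.1 + P.2.2 • P.2.1)
        (cG _ hP.2) (by fun_prop)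
    have c3 : ContinuousAt (fun P : (E × E × 𝕜) × (E × E × 𝕜) × 𝕜 => P.2.2⁻¹) P :=
      ContinuousAt.inv₀ (by fun_prop) hs
    refine (c3.smul (c2.sub c1)).congr ?_
    have : ∀ᶠ P' : (E × E × 𝕜) × (E × E × 𝕜) × 𝕜 in 𝓝 P, P'.2.2 ≠ 0 :=
      ContinuousAt.eventually_ne (by fun_prop) hs
    filter_upwards [this] with P' h'
    simp [H, h']
  have cφ : ContinuousAt (fun P : (E × E × 𝕜) × (E × E × 𝕜) × 𝕜 => φ P.1.1) P :=
    ContinuousAt.comp (f := fun P : (E × E × 𝕜) × (E × E × 𝕜) × 𝕜 => P.1.1)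
      (hφ.continuousAt (hW.mem_nhds hP.1.1)) (by fun_prop)
  have cy' : ContinuousAt y' P :=
    ContinuousAt.comp (f := fun P : (E × E × 𝕜) × (E × E × 𝕜) × 𝕜 => (P.1.1, P.2.1.1, P.2.2))
      (cG _ (hz' P hP)) (by fun_prop)
  have cτ : ContinuousAt τ P := by
    have : Continuous τ := by fun_prop
    exact this.continuousAt
  have cs : ContinuousAt (fun P : (E × E × 𝕜) × (E × E × 𝕜) × 𝕜 => P.2.2) P := by fun_prop
  have cY : ContinuousAt Y P := (cφ.add (cs.smul cy')).add (cτ.smul c1)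
  have hYP : Y P ∈ V := by
    have := (hmemG _ hP.1).2
    simpa [Y, τ, hs] using this
  have cQ : ContinuousAt Q P := by
    have a1 : ContinuousAt (fun P : (E × E × 𝕜) × (E × E × 𝕜) × 𝕜 => P.1.2.2) P := by fun_prop
    have a2 : ContinuousAt (fun P : (E × E × 𝕜) × (E × E × 𝕜) × 𝕜 => P.2.1.2.2) P := by fun_prop
    exact (cφ.prodMk (c1.prodMk a1)).prodMk
      ((cy'.prodMk (continuousAt_const.prodMk a2)).prodMk cs)
  have ch : ContinuousAt (fun P => h (Q P)) P :=
    ContinuousAt.comp (f := Q) (hhc.continuousAt (hOOV.mem_nhds (hQmem P hP hYP))) cQ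
  have cR : ContinuousAt R P := by
    have a1 : ContinuousAt (fun P : (E × E × 𝕜) × (E × E × 𝕜) × 𝕜 => P.2.1.2.1) P := by fun_prop
    have a2 : ContinuousAt (fun P => f (Y P)) P :=
      ContinuousAt.comp (f := Y) (hf.continuousAt (hV.mem_nhds hYP)) cY
    exact a2.prodMk ((a1.sub ch).prodMk (cs.mul cτ))
  have hRW : R P ∈ UOne 𝕜 W := by
    refine ⟨hfW _ hYP, ?_⟩
    simpa [R, hs] using hfW _ hYP
  have cK : ContinuousAt (fun P => G (R P)) P := ContinuousAt.comp (f := R) (cG _ hRW) cR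
  refine cK.congr ?_
  filter_upwards [hOOW.mem_nhds hP, cY.preimage_mem_nhds (hV.mem_nhds hYP)] with P' h1 h2
  by_cases h0 : P'.2.2 = 0
  · simp [H, h0]
  · simpa [H, h0] using key P' h1 h0 h2

/-- **Inverse Function Theorem (C² case).**  Let `E` be a Banach space over a valued
field `𝕜`, `U ⊆ E` open, and `f : U → E` a `C²` map with witnessing continuous map
`g = f^{[1]}` (itself `C¹` on `U^{[1]}`).  If `x ∈ U` and the differential
`y ↦ g (x, y, 0)` is a bicontinuous linear automorphism `A` of `E`, then there is an
open neighbourhood `V ⊆ U` of `x` such that `f (V)` is open, `f` is injective on `V`,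
and the inverse map `f (V) → V` is `C²`; thus `f|_V : V → f (V)` is a
`C²`-diffeomorphism. -/
theorem inverse_function_theorem_C2
    {𝕜 : Type*} [NontriviallyNormedField 𝕜]
    {E : Type*} [NormedAddCommGroup E] [NormedSpace 𝕜 E] [CompleteSpace E]
    {U : Set E} (hU : IsOpen U)
    (f : E → E) (hfc : ContinuousOn f U)
    (g : E × E × 𝕜 → E)
    (hgc : ContinuousOn g (UOne 𝕜 U)) (hgq : IsDiffQuotOn 𝕜 U f g)
    (hgC1 : IsC1On 𝕜 (UOne 𝕜 U) g)
    {x : E} (hx : x ∈ U)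
    (A : E ≃L[𝕜] E) (hA : ∀ y : E, A y = g (x, y, (0 : 𝕜))) :
    ∃ V : Set E, IsOpen V ∧ V ⊆ U ∧ x ∈ V ∧ IsOpen (f '' V) ∧ InjOn f V ∧
      ∃ ginv : E → E, (∀ y ∈ V, ginv (f y) = y) ∧
        (∀ z ∈ f '' V, ginv z ∈ V ∧ f (ginv z) = z) ∧
        IsC2On 𝕜 (f '' V) ginv := by
  have hst : ∀ y ∈ U, HasStrictFDerivAt f (fderiv 𝕜 f y) y ∧ ∀ v, fderiv 𝕜 f y v = g (y, v, 0) := by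
    intro y hy
    obtain ⟨D, hD, hDv⟩ := c2_strict hU hgc hgq hgC1 hy
    rw [hD.hasFDerivAt.fderiv]
    exact ⟨hD, hDv⟩
  have hAx : HasStrictFDerivAt f (A : E →L[𝕜] E) x := by
    have : (A : E →L[𝕜] E) = fderiv 𝕜 f x := by
      ext v
      rw [(hst x hx).2 v, ← hA v]
      rfl
    rw [this]
    exact (hst x hx).1
  have hDc : ContinuousOn (fderiv 𝕜 f) U := strict_fderiv_cont hU fun y hy => (hst y hy).1
  set N : Set E := U ∩ fderiv 𝕜 f ⁻¹' range ((↑) : (E ≃L[𝕜] E) → E →L[𝕜] E) with hN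
  have hNo : IsOpen N := hDc.isOpen_inter_preimage hU ContinuousLinearEquiv.isOpen
  have hxN : x ∈ N := ⟨hx, A, hAx.hasFDerivAt.fderiv.symm⟩
  let e := (hAx.toOpenPartialHomeomorph f).restrOpen N hNo
  have hef : ∀ y, e y = f y := fun y => rfl
  have hes : e.source ⊆ N := fun y hy => hy.2
  have hxe : x ∈ e.source := ⟨hAx.mem_toOpenPartialHomeomorph_source, hxN⟩
  have him : f '' e.source = e.target := e.image_source_eq_target
  obtain ⟨-, h, hhc, hhq⟩ := hgC1
  have hVU : e.source ⊆ U := fun y hy => (hes hy).1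
  have hVU1 : UOne 𝕜 e.source ⊆ UOne 𝕜 U := fun p hp => ⟨hVU hp.1, hVU hp.2⟩
  have hVU2 : UOne 𝕜 (UOne 𝕜 e.source) ⊆ UOne 𝕜 (UOne 𝕜 U) := fun p hp =>
    ⟨hVU1 hp.1, hVU1 hp.2⟩
  have hsym : ∀ z ∈ e.target, ∃ B : E ≃L[𝕜] E, (B : E →L[𝕜] E) = fderiv 𝕜 f (e.symm z) ∧
      HasStrictFDerivAt e.symm (B.symm : E →L[𝕜] E) z := by
    intro z hz
    obtain ⟨B, hB⟩ := (hes (e.map_target hz)).2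
    refine ⟨B, hB, e.hasStrictFDerivAt_symm hz ?_⟩
    rw [hB]
    exact (hst _ (hVU (e.map_target hz))).1
  have hsym' : ∀ z ∈ e.target, HasStrictFDerivAt e.symm (fderiv 𝕜 e.symm z) z := by
    intro z hz
    obtain ⟨B, -, hB⟩ := hsym z hz
    rw [hB.hasFDerivAt.fderiv]
    exact hB
  classical
  let G : E × E × 𝕜 → E := fun p => if p.2.2 = 0 then fderiv 𝕜 e.symm p.1 p.2.1 else
    p.2.2⁻¹ • (e.symm (p.1 + p.2.2 • p.2.1) - e.symm p.1)
  have hG0 : ∀ z w, G (z, w, 0) = fderiv 𝕜 e.symm z w := fun z w => by simp [G]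
  have hG1 : ∀ z w t, t ≠ 0 → G (z, w, t) = t⁻¹ • (e.symm (z + t • w) - e.symm z) :=
    fun z w t ht => by simp [G, ht]
  have hGc : ContinuousOn G (UOne 𝕜 e.target) := strict_quot_cont e.open_target hsym' hG0 hG1
  have hGq : IsDiffQuotOn 𝕜 e.target e.symm G := fun p _ h0 => hG1 _ _ _ h0
  have hgqV : IsDiffQuotOn 𝕜 e.source f g := fun p hp => hgq p (hVU1 hp)
  refine ⟨e.source, e.open_source, hVU, hxe, by rw [him]; exact e.open_target, e.injOn,
    e.symm, fun y hy => e.left_inv hy, ?_, ?_⟩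
  · rw [him]
    exact fun z hz => ⟨e.map_target hz, e.right_inv hz⟩
  rw [him]
  refine ⟨e.continuousOn_symm, G, hGc, hGq, ?_⟩
  refine inv_quot_c1 (f := f) (φ := e.symm) (g := g) (h := h) e.open_source e.open_target
    (hfc.mono hVU) (fun y hy => e.map_source hy) e.continuousOn_symm (fun z hz => e.map_target hz)
    hgqV (hhc.mono hVU2) (fun p hp => hhq p (hVU2 hp)) ?_ hGc hGq ?_ ?_
  · intro y hy v η s
    simp only [← (hst y (hVU hy)).2, map_add, map_smul]
  · rintro ⟨z, w, t⟩ hp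
    have hz : z ∈ e.target := hp.1
    have hzw : z + t • w ∈ e.target := hp.2
    simp only
    rcases eq_or_ne t 0 with rfl | ht
    · obtain ⟨B, hB1, hB2⟩ := hsym z hz
      rw [← (hst _ (hVU (e.map_target hz))).2, hG0, hB2.hasFDerivAt.fderiv, ← hB1]
      simp
    · have e1 : e.symm z + t • G (z, w, t) = e.symm (z + t • w) := by
        rw [hG1 _ _ _ ht, smul_smul, mul_inv_cancel₀ ht, one_smul]; abel
      rw [hgq (e.symm z, G (z, w, t), t) ⟨hVU (e.map_target hz), by
        simpa only [e1] using hVU (e.map_target hzw)⟩ ht]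
      simp only [e1, ← hef, e.right_inv hz, e.right_inv hzw]
      rw [add_sub_cancel_left, smul_smul, inv_mul_cancel₀ ht, one_smul]
  · rintro ⟨y, v, t⟩ hp
    have hy : y ∈ e.source := hp.1
    have hyv : y + t • v ∈ e.source := hp.2
    simp only
    rcases eq_or_ne t 0 with rfl | ht
    · obtain ⟨B, hB1, hB2⟩ := hsym (f y) (e.map_source hy)
      have e1 : e.symm (f y) = y := e.left_inv hy
      rw [e1] at hB1
      rw [hG0, hB2.hasFDerivAt.fderiv, ← (hst _ (hVU hy)).2, ← hB1]
      simp
    · have e1 : f y + t • g (y, v, t) = f (y + t • v) := by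
        rw [hgqV _ hp ht, smul_smul, mul_inv_cancel₀ ht, one_smul]; simp
      have e2 : e.symm (f y) = y := e.left_inv hy
      have e3 : e.symm (f (y + t • v)) = y + t • v := e.left_inv hyv
      rw [hG1 _ _ _ ht, e1, e2, e3, add_sub_cancel_left, smul_smul, inv_mul_cancel₀ ht, one_smul]
end

section
/- Inverse Function Theorem in finite dimensions (C¹ case): Let 𝕜 be a complete valued field, E a finite-dimensional normed 𝕜-vector space, U ⊆ E open, and f : U → E a C¹ map with witnessing continuous map f^{[1]} : U^{[1]} → E. Suppose x ∈ U is such that there is a bicontinuous 𝕜-linear automorphism A of E with A(y) = f^{[1]}(x,y,0) for all y ∈ E. Then there exists an open neighbourhood V ⊆ U of x such that f(V) is open in E, f is injective on V, and the inverse map g : f(V) → E of f|_V is a C¹ map on the open set f(V). -/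
open Set Metric Filter Topology

open Asymptotics in
theorem aux_strict
    {𝕜 : Type*} [NontriviallyNormedField 𝕜] [CompleteSpace 𝕜]
    {E : Type*} [NormedAddCommGroup E] [NormedSpace 𝕜 E] [FiniteDimensional 𝕜 E]
    {U : Set E} (hU : IsOpen U) (f : E → E) (g : E × E × 𝕜 → E)
    (hgc : ContinuousOn g (UOne 𝕜 U)) (hgq : IsDiffQuotOn 𝕜 U f g)
    {ι : Type*} [Fintype ι] (e : ι → E) (c : ι → E →L[𝕜] 𝕜)
    (hec : ∀ w, ∑ i, c i w • e i = w)
    {x : E} (hx : x ∈ U) :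
    HasStrictFDerivAt f (∑ i, (c i).smulRight (g (x, e i, (0 : 𝕜)))) x := by
  classical
  have hopen : IsOpen (UOne 𝕜 U) := by
    unfold UOne
    exact (hU.preimage continuous_fst).inter
      (hU.preimage (f := fun p : E × E × 𝕜 => p.1 + p.2.2 • p.2.1) (by fun_prop))
  have key : ∀ s : Finset ι,
      (fun p : E × E => f (p.2 + ∑ i ∈ s, c i (p.1 - p.2) • e i) - f p.2
        - ∑ i ∈ s, c i (p.1 - p.2) • g (x, e i, (0 : 𝕜)))
      =o[𝓝 (x, x)] fun p : E × E => p.1 - p.2 := by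
    intro s
    induction s using Finset.induction_on with
    | empty => simp
    | insert a s ha ih =>
      have hmem : (x, e a, (0 : 𝕜)) ∈ UOne 𝕜 U := by
        simp [UOne, hx]
      have hq : Tendsto (fun p : E × E =>
          ((p.2 + ∑ i ∈ s, c i (p.1 - p.2) • e i, e a, c a (p.1 - p.2)) : E × E × 𝕜))
          (𝓝 (x, x)) (𝓝 (x, e a, (0 : 𝕜))) := by
        have : Continuous (fun p : E × E =>
          ((p.2 + ∑ i ∈ s, c i (p.1 - p.2) • e i, e a, c a (p.1 - p.2)) : E × E × 𝕜)) := by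
          fun_prop
        have h2 := this.tendsto (x, x)
        simpa using h2
      have hev := hq.eventually (hopen.mem_nhds hmem)
      have hlim : Tendsto (fun p : E × E =>
          g (p.2 + ∑ i ∈ s, c i (p.1 - p.2) • e i, e a, c a (p.1 - p.2))
            - g (x, e a, (0 : 𝕜))) (𝓝 (x, x)) (𝓝 0) := by
        have h1 := ((hgc.continuousAt (hopen.mem_nhds hmem)).tendsto.comp hq).sub_const
          (g (x, e a, (0 : 𝕜)))
        simpa using h1
      have hO : (fun p : E × E => c a (p.1 - p.2)) =O[𝓝 (x, x)] fun p : E × E => p.1 - p.2 :=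
        (c a).isBigO_comp _ _
      have hstep : (fun p : E × E => c a (p.1 - p.2) •
          (g (p.2 + ∑ i ∈ s, c i (p.1 - p.2) • e i, e a, c a (p.1 - p.2))
            - g (x, e a, (0 : 𝕜)))) =o[𝓝 (x, x)] fun p : E × E => p.1 - p.2 := by
        have h3 := hO.norm_right.smul_isLittleO ((isLittleO_one_iff ℝ).2 hlim)
        refine IsLittleO.of_norm_right ?_
        simpa using h3
      refine (ih.add hstep).congr' ?_ EventuallyEq.rfl
      filter_upwards [hev] with p hp
      have hg : c a (p.1 - p.2) •
          g (p.2 + ∑ i ∈ s, c i (p.1 - p.2) • e i, e a, c a (p.1 - p.2))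
          = f (p.2 + ∑ i ∈ s, c i (p.1 - p.2) • e i + c a (p.1 - p.2) • e a)
            - f (p.2 + ∑ i ∈ s, c i (p.1 - p.2) • e i) := by
        by_cases h0 : c a (p.1 - p.2) = 0
        · simp [h0]
        · rw [hgq _ hp h0, smul_inv_smul₀ h0]
      rw [smul_sub, hg, Finset.sum_insert ha, Finset.sum_insert ha,
        add_comm (c a (p.1 - p.2) • e a), ← add_assoc]
      abel
  refine HasStrictFDerivAt.of_isLittleO ?_
  refine (key Finset.univ).congr_left ?_
  intro p
  rw [hec]
  simp

open Asymptotics in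
theorem aux_C1
    {𝕜 : Type*} [NontriviallyNormedField 𝕜]
    {E : Type*} [NormedAddCommGroup E] [NormedSpace 𝕜 E]
    {W : Set E} (hW : IsOpen W) (h : E → E) (D : E → E →L[𝕜] E)
    (hD : ContinuousOn D W) (hh : ∀ z ∈ W, HasStrictFDerivAt h (D z) z) :
    IsC1On 𝕜 W h := by
  classical
  have hcont : ContinuousOn h W := fun z hz => (hh z hz).continuousAt.continuousWithinAt
  refine ⟨hcont, fun p => if p.2.2 = 0 then D p.1 p.2.1 else
    (p.2.2)⁻¹ • (h (p.1 + p.2.2 • p.2.1) - h p.1), ?_, ?_⟩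
  · rintro ⟨z, y, t⟩ ⟨hz, hzt⟩
    dsimp only at hz hzt
    apply ContinuousAt.continuousWithinAt
    by_cases ht : t = 0
    · subst ht
      have hDz : ContinuousAt D z := hD.continuousAt (hW.mem_nhds hz)
      have h1 : Tendsto (fun p : E × E × 𝕜 => D p.1 p.2.1) (𝓝 (z, y, (0 : 𝕜))) (𝓝 (D z y)) := by
        have a1 : ContinuousAt (fun p : E × E × 𝕜 => D p.1) (z, y, (0 : 𝕜)) :=
          ContinuousAt.comp (f := Prod.fst) (g := D) hDz continuousAt_fst
        have a2 : ContinuousAt (fun p : E × E × 𝕜 => p.2.1) (z, y, (0 : 𝕜)) := by fun_prop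
        exact a1.clm_apply a2
      have hq : Tendsto (fun p : E × E × 𝕜 => (p.1 + p.2.2 • p.2.1, p.1))
          (𝓝 (z, y, (0 : 𝕜))) (𝓝 (z, z)) := by
        have : Continuous (fun p : E × E × 𝕜 => (p.1 + p.2.2 • p.2.1, p.1)) := by fun_prop
        simpa using this.tendsto (z, y, (0 : 𝕜))
      have h2 : (fun p : E × E × 𝕜 => h (p.1 + p.2.2 • p.2.1) - h p.1 - p.2.2 • D z p.2.1)
          =o[𝓝 (z, y, (0 : 𝕜))] fun p => p.2.2 • p.2.1 := by
        have := (hh z hz).isLittleO.comp_tendsto hq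
        simpa [Function.comp_def] using this
      have h3 : (fun p : E × E × 𝕜 => (p.2.2)⁻¹ • (h (p.1 + p.2.2 • p.2.1) - h p.1
          - p.2.2 • D z p.2.1)) =o[𝓝 (z, y, (0 : 𝕜))] fun p => p.2.1 := by
        have := (isBigO_refl (fun p : E × E × 𝕜 => (p.2.2)⁻¹) (𝓝 (z, y, (0 : 𝕜)))).smul_isLittleO h2
        refine this.trans_isBigO ?_
        refine IsBigO.of_bound 1 (Eventually.of_forall fun p => ?_)
        by_cases h0 : p.2.2 = 0
        · simp [h0]
        · rw [inv_smul_smul₀ h0, one_mul]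
      have h4 : Tendsto (fun p : E × E × 𝕜 => (p.2.2)⁻¹ • (h (p.1 + p.2.2 • p.2.1) - h p.1
          - p.2.2 • D z p.2.1)) (𝓝 (z, y, (0 : 𝕜))) (𝓝 0) := by
        have a2 : ContinuousAt (fun p : E × E × 𝕜 => p.2.1) (z, y, (0 : 𝕜)) := by fun_prop
        exact (isLittleO_one_iff ℝ).1 (h3.trans_isBigO (a2.tendsto.isBigO_one ℝ))
      have h5 : Tendsto (fun p : E × E × 𝕜 => (p.2.2)⁻¹ • (h (p.1 + p.2.2 • p.2.1) - h p.1
          - p.2.2 • D z p.2.1) + D z p.2.1) (𝓝 (z, y, (0 : 𝕜))) (𝓝 (D z y)) := by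
        have a2 : Continuous (fun p : E × E × 𝕜 => D z p.2.1) := by fun_prop
        simpa using h4.add (a2.tendsto (z, y, (0 : 𝕜)))
      have h6 := Tendsto.if' (p := fun p : E × E × 𝕜 => p.2.2 = 0) h1 h5
      unfold ContinuousAt
      simp only [if_true]
      refine h6.congr fun p => ?_
      by_cases h0 : p.2.2 = 0
      · simp [h0]
      · simp only [h0, if_false]
        rw [smul_sub _ _ (p.2.2 • _), inv_smul_smul₀ h0, sub_add_cancel]
    · have hev : ∀ᶠ p : E × E × 𝕜 in 𝓝 (z, y, t), p.2.2 ≠ 0 := by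
        have : ContinuousAt (fun p : E × E × 𝕜 => p.2.2) (z, y, t) := by fun_prop
        exact this.eventually_ne ht
      have hc : ContinuousAt (fun p : E × E × 𝕜 =>
          (p.2.2)⁻¹ • (h (p.1 + p.2.2 • p.2.1) - h p.1)) (z, y, t) := by
        have b1 : ContinuousAt (fun p : E × E × 𝕜 => (p.2.2)⁻¹) (z, y, t) :=
          ContinuousAt.inv₀ (by fun_prop) ht
        have b2 : ContinuousAt (fun p : E × E × 𝕜 => h (p.1 + p.2.2 • p.2.1)) (z, y, t) :=
          ContinuousAt.comp (f := fun p : E × E × 𝕜 => p.1 + p.2.2 • p.2.1) (g := h)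
            (hh _ hzt).continuousAt (by fun_prop)
        have b3 : ContinuousAt (fun p : E × E × 𝕜 => h p.1) (z, y, t) :=
          ContinuousAt.comp (f := Prod.fst) (g := h) (hh _ hz).continuousAt continuousAt_fst
        exact b1.smul (b2.sub b3)
      refine hc.congr ?_
      filter_upwards [hev] with p hp
      simp [hp]
  · intro p hp h0
    simp [h0]

/-- **Inverse Function Theorem in finite dimensions (C¹ case).**  Let `𝕜` be a
complete valued field, `E` a finite-dimensional normed `𝕜`-vector space, `U ⊆ E`
open, and `f : U → E` a `C¹` map with witnessing continuous map `g = f^{[1]}`.  If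
`x ∈ U` and `y ↦ g (x, y, 0)` is a bicontinuous linear automorphism `A` of `E`, then
there is an open neighbourhood `V ⊆ U` of `x` such that `f (V)` is open, `f` is
injective on `V`, and the inverse map `f (V) → V` is `C¹`. -/
theorem inverse_function_theorem_finite_dimensional_C1
    {𝕜 : Type*} [NontriviallyNormedField 𝕜] [CompleteSpace 𝕜]
    {E : Type*} [NormedAddCommGroup E] [NormedSpace 𝕜 E] [FiniteDimensional 𝕜 E]
    {U : Set E} (hU : IsOpen U)
    (f : E → E) (hfc : ContinuousOn f U)
    (g : E × E × 𝕜 → E)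
    (hgc : ContinuousOn g (UOne 𝕜 U)) (hgq : IsDiffQuotOn 𝕜 U f g)
    {x : E} (hx : x ∈ U)
    (A : E ≃L[𝕜] E) (hA : ∀ y : E, A y = g (x, y, (0 : 𝕜))) :
    ∃ V : Set E, IsOpen V ∧ V ⊆ U ∧ x ∈ V ∧ IsOpen (f '' V) ∧ InjOn f V ∧
      ∃ ginv : E → E, (∀ y ∈ V, ginv (f y) = y) ∧
        (∀ z ∈ f '' V, ginv z ∈ V ∧ f (ginv z) = z) ∧
        IsC1On 𝕜 (f '' V) ginv := by
  classical
  have : CompleteSpace E := FiniteDimensional.complete 𝕜 E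
  let b := Module.finBasis 𝕜 E
  let c : Fin (Module.finrank 𝕜 E) → E →L[𝕜] 𝕜 := fun i => LinearMap.toContinuousLinearMap (b.coord i)
  have hec : ∀ w, ∑ i, c i w • b i = w := fun w => b.sum_repr w
  let D : E → E →L[𝕜] E := fun z => ∑ i, (c i).smulRight (g (z, b i, (0 : 𝕜)))
  have hstrict : ∀ z ∈ U, HasStrictFDerivAt f (D z) z := fun z hz =>
    aux_strict hU f g hgc hgq b c hec hz
  have hDA : D x = (A : E →L[𝕜] E) := by
    ext w
    have : A w = A (∑ i, c i w • b i) := by rw [hec]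
    simp [D, this, ← hA]
  have hDc : ContinuousOn D U := by
    refine continuousOn_finsetSum _ fun i _ => ?_
    have h1 : ContinuousOn (fun z => g (z, b i, (0 : 𝕜))) U :=
      hgc.comp (f := fun z => (z, b i, (0 : 𝕜))) (by fun_prop) (fun z hz => by simp [UOne, hz])
    exact ((ContinuousLinearMap.smulRightL 𝕜 E E (c i)).continuous).comp_continuousOn h1
  have hfx : HasStrictFDerivAt f (A : E →L[𝕜] E) x := hDA ▸ hstrict x hx
  let Φ := hfx.toOpenPartialHomeomorph f
  have hΦ : (Φ : E → E) = f := rfl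
  let N : Set (E →L[𝕜] E) := range ((↑) : (E ≃L[𝕜] E) → E →L[𝕜] E)
  have hN : IsOpen N := ContinuousLinearEquiv.isOpen
  let V : Set E := Φ.source ∩ (U ∩ D ⁻¹' N)
  have hUN : IsOpen (U ∩ D ⁻¹' N) := hDc.isOpen_inter_preimage hU hN
  have hVo : IsOpen V := Φ.open_source.inter hUN
  have hWo : IsOpen (f '' V) := Φ.isOpen_image_of_subset_source hVo inter_subset_left
  have hleft : ∀ y ∈ V, Φ.symm (f y) = y := fun y hy => Φ.left_inv hy.1
  have hright : ∀ z ∈ f '' V, Φ.symm z ∈ V ∧ f (Φ.symm z) = z := by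
    rintro _ ⟨y, hy, rfl⟩
    rw [hleft y hy]
    exact ⟨hy, rfl⟩
  have hsc : ContinuousOn Φ.symm (f '' V) := by
    refine Φ.continuousOn_symm.mono ?_
    rintro _ ⟨y, hy, rfl⟩
    exact Φ.map_source hy.1
  refine ⟨V, hVo, fun y hy => hy.2.1, ⟨hfx.mem_toOpenPartialHomeomorph_source, hx, ⟨A, hDA.symm⟩⟩,
    hWo, Φ.injOn.mono inter_subset_left, Φ.symm, hleft, hright, ?_⟩
  refine aux_C1 hWo Φ.symm (fun z => ContinuousLinearMap.inverse (D (Φ.symm z))) ?_ ?_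
  · intro z hz
    obtain ⟨hV, -⟩ := hright z hz
    obtain ⟨B, hB⟩ := hV.2.2
    have h1 : ContinuousAt (ContinuousLinearMap.inverse : (E →L[𝕜] E) → _) (D (Φ.symm z)) := by
      rw [← hB]
      exact (contDiffAt_map_inverse (n := 0) B).continuousAt
    have h2 : ContinuousWithinAt (fun z => D (Φ.symm z)) (f '' V) z :=
      (hDc.comp hsc (fun z hz => (hright z hz).1.2.1)) z hz
    exact ContinuousAt.comp_continuousWithinAt (f := fun z => D (Φ.symm z)) h1 h2
  · intro z hz
    obtain ⟨hV, hfz⟩ := hright z hz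
    obtain ⟨B, hB⟩ := hV.2.2
    have ht : z ∈ Φ.target := by
      obtain ⟨y, hy, rfl⟩ := hz
      exact Φ.map_source hy.1
    have := Φ.hasStrictFDerivAt_symm (f' := B) ht (by rw [hB]; exact hstrict _ hV.2.1)
    rw [← hB, ContinuousLinearMap.inverse_equiv]
    exact this
end

section
/- Ultrametric Inverse Function Theorem (exact images of balls): Let (𝕜,|·|) be an ultrametric valued field and (F,‖·‖) an ultrametric Banach space over 𝕜 (i.e. ‖·‖ satisfies the ultrametric inequality ‖v+w‖ ≤ max{‖v‖,‖w‖}). Let x₀ ∈ F, r > 0, A : F → F a bicontinuous 𝕜-linear automorphism, and f : B_r(x₀) → F a map on the open ball B_r(x₀) := {y ∈ F : ‖y − x₀‖ < r} such that ‖f(y) − f(z) − A(y − z)‖ ≤ c·‖y − z‖ for all y, z ∈ B_r(x₀), where c < ‖A⁻¹‖⁻¹ (operator norm). Then for every y ∈ B_r(x₀) and every s with 0 < s ≤ r one has the exact image formula f(B_s(y)) = f(y) + A(B_s(0)), where B_s(y) ⊆ B_r(x₀) by the ultrametric inequality and A(B_s(0)) := {A(w) : ‖w‖ < s}. -/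
open Set Metric Filter Topology

/-- **Ultrametric Inverse Function Theorem (exact images of balls).**  Let `𝕜` be an
ultrametric valued field and `F` an ultrametric Banach space over `𝕜`.  Let
`x₀ ∈ F`, `r > 0`, `A ∈ GL(F)` a bicontinuous linear automorphism, and
`f : B_r(x₀) → F` with `‖f y − f z − A (y − z)‖ ≤ c·‖y − z‖` on `B_r(x₀)` for some
`c < ‖A⁻¹‖⁻¹`.  Then for every `y ∈ B_r(x₀)` and `0 < s ≤ r` one has
`B_s(y) ⊆ B_r(x₀)` and the exact image formula `f (B_s(y)) = f y + A (B_s(0))`. -/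
theorem ultrametric_inverse_function_theorem_exact_images
    {𝕜 : Type*} [NontriviallyNormedField 𝕜] [IsUltrametricDist 𝕜]
    {F : Type*} [NormedAddCommGroup F] [NormedSpace 𝕜 F] [CompleteSpace F]
    [IsUltrametricDist F]
    (x₀ : F) (r : ℝ) (hr : 0 < r)
    (A : F ≃L[𝕜] F) (c : ℝ) (hc : c < ‖(A.symm : F →L[𝕜] F)‖⁻¹)
    (f : F → F)
    (hf : ∀ y ∈ ball x₀ r, ∀ z ∈ ball x₀ r, ‖f y - f z - A (y - z)‖ ≤ c * ‖y - z‖) :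
    ∀ y ∈ ball x₀ r, ∀ s : ℝ, 0 < s → s ≤ r →
      ball y s ⊆ ball x₀ r ∧
      f '' ball y s = (fun w => f y + A w) '' ball (0 : F) s := by
  intro y hy s hs hsr
  have hsub : ball y s ⊆ ball x₀ r := by
    intro z hz
    rw [IsUltrametricDist.ball_eq_of_mem hy, mem_ball_comm] 
    rw [mem_ball] at hz
    rw [mem_ball, dist_comm]
    exact lt_of_lt_of_le hz hsr
  refine ⟨hsub, ?_⟩
  obtain ⟨K, hK1, hK⟩ : ∃ K : NNReal, K < 1 ∧ ∀ u ∈ ball x₀ r, ∀ v ∈ ball x₀ r,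
      ‖u - v - A.symm (f u - f v)‖ ≤ K * ‖u - v‖ := by
    refine ⟨Real.toNNReal (‖(A.symm : F →L[𝕜] F)‖ * c), ?_, ?_⟩
    · rw [Real.toNNReal_lt_one]
      rcases (norm_nonneg (A.symm : F →L[𝕜] F)).eq_or_lt with h | h
      · rw [← h]; simp
      · calc _ < ‖(A.symm : F →L[𝕜] F)‖ * ‖(A.symm : F →L[𝕜] F)‖⁻¹ := by gcongr
          _ = 1 := mul_inv_cancel₀ h.ne'
    · intro u hu v hv
      have e : u - v - A.symm (f u - f v)
          = -((A.symm : F →L[𝕜] F) (f u - f v - A (u - v))) := by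
        simp [map_sub]
      rw [e, norm_neg]
      calc _ ≤ ‖(A.symm : F →L[𝕜] F)‖ * ‖f u - f v - A (u - v)‖ :=
            ContinuousLinearMap.le_opNorm _ _
        _ ≤ ‖(A.symm : F →L[𝕜] F)‖ * (c * ‖u - v‖) := by gcongr; exact hf u hu v hv
        _ = (‖(A.symm : F →L[𝕜] F)‖ * c) * ‖u - v‖ := by ring
        _ ≤ _ := by gcongr; exact Real.le_coe_toNNReal _
  have hK' : ∀ u ∈ ball x₀ r, ∀ v ∈ ball x₀ r,
      ‖u - v - A.symm (f u - f v)‖ ≤ ‖u - v‖ := fun u hu v hv =>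
    (hK u hu v hv).trans (mul_le_of_le_one_left (norm_nonneg _) (by exact_mod_cast hK1.le))
  apply Subset.antisymm
  · rintro _ ⟨x, hx, rfl⟩
    refine ⟨A.symm (f x - f y), ?_, by simp⟩
    rw [mem_ball_zero_iff]
    rw [mem_ball, dist_eq_norm] at hx
    have h1 := hK' x (hsub (by rwa [mem_ball, dist_eq_norm])) y hy
    have e : A.symm (f x - f y) = (x - y) - (x - y - A.symm (f x - f y)) := by abel
    rw [e, sub_eq_add_neg]
    refine (IsUltrametricDist.norm_add_le_max _ _).trans_lt ?_
    rw [norm_neg]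
    exact (max_lt hx (h1.trans_lt hx))
  · rintro _ ⟨w, hw, rfl⟩
    rw [mem_ball_zero_iff] at hw
    have hcb : closedBall y ‖w‖ ⊆ ball y s := closedBall_subset_ball hw
    let T : F → F := fun x => x - y - A.symm (f x - f y) + w + y
    have hT : MapsTo T (closedBall y ‖w‖) (closedBall y ‖w‖) := by
      intro x hx
      have h1 := hK' x (hsub (hcb hx)) y hy
      rw [mem_closedBall, dist_eq_norm] at hx ⊢
      simp only [T, add_sub_cancel_right]
      exact (IsUltrametricDist.norm_add_le_max _ _).trans (max_le (h1.trans hx) le_rfl)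
    have hcon : ContractingWith K hT.restrict := by
      refine ⟨hK1, LipschitzWith.of_dist_le_mul ?_⟩
      rintro ⟨u, hu⟩ ⟨v, hv⟩
      have h1 := hK u (hsub (hcb hu)) v (hsub (hcb hv))
      rw [Subtype.dist_eq, Subtype.dist_eq, dist_eq_norm, dist_eq_norm]
      have e : T u - T v = u - v - A.symm (f u - f v) := by
        simp only [T, map_sub]
        abel
      rw [← e] at h1
      exact h1
    obtain ⟨x, hx, hfix, -⟩ := hcon.exists_fixedPoint' isClosed_closedBall.isComplete
      hT (x := y) (mem_closedBall_self (norm_nonneg _)) (edist_ne_top _ _)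
    refine ⟨x, hcb hx, ?_⟩
    have h2 : x - y - A.symm (f x - f y) + w + y = x := hfix
    have h3 : w = A.symm (f x - f y) := by
      have : x - y - A.symm (f x - f y) + w + y = x + (w - A.symm (f x - f y)) := by abel
      rw [this, add_eq_left, sub_eq_zero] at h2
      exact h2
    simp [h3]
end

section
/- Compatibility with classical real calculus: Let n, m ∈ ℕ, U ⊆ ℝⁿ open, and f : U → ℝᵐ. Then f is continuously differentiable in the classical (Fréchet) sense on U if and only if f is C¹ in the extended-difference-quotient sense, i.e. if and only if f is continuous and there exists a continuous map f^{[1]} : U^{[1]} → ℝᵐ with f^{[1]}(x,y,t) = t⁻¹·(f(x + t·y) − f(x)) for all (x,y,t) ∈ U^{[1]} with t ≠ 0. -/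
open Set Metric Filter Topology

lemma UOne_isOpen {n : ℕ} {U : Set (Fin n → ℝ)} (hU : IsOpen U) : IsOpen (UOne ℝ U) := by
  have h1 : IsOpen ((fun p : (Fin n → ℝ) × (Fin n → ℝ) × ℝ => p.1) ⁻¹' U) :=
    hU.preimage (by fun_prop)
  have h2 : IsOpen ((fun p : (Fin n → ℝ) × (Fin n → ℝ) × ℝ => p.1 + p.2.2 • p.2.1) ⁻¹' U) :=
    hU.preimage (by fun_prop)
  exact h1.inter h2

lemma forward_aux {n m : ℕ} {U : Set (Fin n → ℝ)} (hU : IsOpen U)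
    (f : (Fin n → ℝ) → (Fin m → ℝ)) (hf : ContDiffOn ℝ 1 f U) :
    ∃ g : (Fin n → ℝ) × (Fin n → ℝ) × ℝ → (Fin m → ℝ),
          ContinuousOn g (UOne ℝ U) ∧ IsDiffQuotOn ℝ U f g := by
  classical
  refine ⟨fun p => if p.2.2 = 0 then fderiv ℝ f p.1 p.2.1 else
    (p.2.2)⁻¹ • (f (p.1 + p.2.2 • p.2.1) - f p.1), ?_, ?_⟩
  swap
  · intro p _ ht
    simp [ht]
  have hfc := hf.continuousOn
  have hopen := UOne_isOpen hU
  rintro ⟨x, y, t⟩ ⟨hx, hxy⟩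
  simp only at hx hxy
  apply ContinuousAt.continuousWithinAt
  have hfx : ContinuousAt f x := hfc.continuousAt (hU.mem_nhds hx)
  by_cases ht : t = 0
  · subst ht
    have hD : ContinuousAt (fderiv ℝ f) x :=
      (hf.continuousOn_fderiv_of_isOpen hU le_rfl).continuousAt (hU.mem_nhds hx)
    have hS : HasStrictFDerivAt f (fderiv ℝ f x) x :=
      (hf.contDiffAt (hU.mem_nhds hx)).hasStrictFDerivAt one_ne_zero
    rw [← continuousWithinAt_univ,
      show (univ : Set ((Fin n → ℝ) × (Fin n → ℝ) × ℝ)) = {p | p.2.2 = 0} ∪ {p | p.2.2 ≠ 0} by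
        ext p; simp [em], continuousWithinAt_union]
    constructor
    · have h1 : ContinuousAt (fun p : (Fin n → ℝ) × (Fin n → ℝ) × ℝ => fderiv ℝ f p.1 p.2.1)
          (x, y, 0) := by
        apply ContinuousAt.clm_apply
        · exact ContinuousAt.comp (g := fderiv ℝ f) (f := Prod.fst) hD continuousAt_fst
        · fun_prop
      refine h1.continuousWithinAt.congr ?_ ?_
      · intro p hp
        simp [show p.2.2 = 0 from hp]
      · simp
    · rw [ContinuousWithinAt]
      simp only [if_true]
      have hy : Tendsto (fun p : (Fin n → ℝ) × (Fin n → ℝ) × ℝ => fderiv ℝ f x p.2.1)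
          (𝓝[{p | p.2.2 ≠ 0}] (x, y, 0)) (𝓝 (fderiv ℝ f x y)) := by
        have : Continuous (fun p : (Fin n → ℝ) × (Fin n → ℝ) × ℝ => fderiv ℝ f x p.2.1) := by
          fun_prop
        exact (this.tendsto (x, y, 0)).mono_left nhdsWithin_le_nhds
      have hpair : Tendsto (fun p : (Fin n → ℝ) × (Fin n → ℝ) × ℝ =>
          (p.1 + p.2.2 • p.2.1, p.1)) (𝓝[{p | p.2.2 ≠ 0}] (x, y, 0)) (𝓝 (x, x)) := by
        have : Continuous (fun p : (Fin n → ℝ) × (Fin n → ℝ) × ℝ =>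
          (p.1 + p.2.2 • p.2.1, p.1)) := by fun_prop
        have h := this.tendsto (x, y, 0)
        simp only [zero_smul, add_zero] at h
        exact h.mono_left nhdsWithin_le_nhds
      have ho := (hS.isLittleO).comp_tendsto hpair
      have ho2 := (Asymptotics.isBigO_refl
        (fun p : (Fin n → ℝ) × (Fin n → ℝ) × ℝ => (p.2.2)⁻¹)
        (𝓝[{p | p.2.2 ≠ 0}] (x, y, 0))).smul_isLittleO ho
      have hb : (fun p : (Fin n → ℝ) × (Fin n → ℝ) × ℝ => p.2.1)
          =O[𝓝[{p | p.2.2 ≠ 0}] (x, y, 0)] (fun _ => (1 : ℝ)) := by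
        have : Continuous (fun p : (Fin n → ℝ) × (Fin n → ℝ) × ℝ => p.2.1) := by fun_prop
        exact ((this.tendsto (x, y, 0)).mono_left nhdsWithin_le_nhds).isBigO_one ℝ
      have hmem : ∀ᶠ p : (Fin n → ℝ) × (Fin n → ℝ) × ℝ in 𝓝[{p | p.2.2 ≠ 0}] (x, y, 0),
          p.2.2 ≠ 0 := self_mem_nhdsWithin
      have ho3 := (ho2.congr' (f₂ := fun p => (p.2.2)⁻¹ • (f (p.1 + p.2.2 • p.2.1) - f p.1)
          - fderiv ℝ f x p.2.1) (g₂ := fun p => p.2.1) (by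
            filter_upwards [hmem] with p hp
            simp [smul_sub, smul_smul, hp]) (by
            filter_upwards [hmem] with p hp
            simp [smul_smul, hp])).trans_isBigO hb
      rw [Asymptotics.isLittleO_one_iff] at ho3
      have h4 := ho3.add hy
      simp only [sub_add_cancel, zero_add] at h4
      refine h4.congr' ?_
      filter_upwards [hmem] with p hp
      simp [hp]
  · have hfy : ContinuousAt f (x + t • y) := hfc.continuousAt (hU.mem_nhds hxy)
    have h1 : ContinuousAt (fun p : (Fin n → ℝ) × (Fin n → ℝ) × ℝ =>
        (p.2.2)⁻¹ • (f (p.1 + p.2.2 • p.2.1) - f p.1)) (x, y, t) := by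
      apply ContinuousAt.fun_smul
      · exact ContinuousAt.fun_inv₀ (f := fun p : (Fin n → ℝ) × (Fin n → ℝ) × ℝ => p.2.2)
          (by fun_prop) ht
      · apply ContinuousAt.fun_sub
        · exact ContinuousAt.comp (g := f)
            (f := fun p : (Fin n → ℝ) × (Fin n → ℝ) × ℝ => p.1 + p.2.2 • p.2.1) hfy (by fun_prop)
        · exact ContinuousAt.comp (g := f) (f := Prod.fst) hfx continuousAt_fst
    refine h1.congr ?_
    have : ∀ᶠ p : (Fin n → ℝ) × (Fin n → ℝ) × ℝ in 𝓝 (x, y, t), p.2.2 ≠ 0 :=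
      ContinuousAt.eventually_ne (g := fun p : (Fin n → ℝ) × (Fin n → ℝ) × ℝ => p.2.2)
        (by fun_prop) ht
    filter_upwards [this] with p hp
    simp [hp]

lemma backward_aux {n m : ℕ} {U : Set (Fin n → ℝ)} (hU : IsOpen U)
    (f : (Fin n → ℝ) → (Fin m → ℝ))
    (g : (Fin n → ℝ) × (Fin n → ℝ) × ℝ → (Fin m → ℝ))
    (hg : ContinuousOn g (UOne ℝ U)) (hq : IsDiffQuotOn ℝ U f g) (x : Fin n → ℝ) (hx : x ∈ U) :
    ∃ L : (Fin n → ℝ) →L[ℝ] (Fin m → ℝ), (∀ y, L y = g (x, y, 0)) ∧ HasFDerivAt f L x := by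
  have hopen := UOne_isOpen hU
  have hmem0 : ∀ y, (x, y, (0 : ℝ)) ∈ UOne ℝ U := fun y => ⟨hx, by simpa using hx⟩
  have hgc : ∀ y, ContinuousAt g (x, y, 0) := fun y =>
    hg.continuousAt (hopen.mem_nhds (hmem0 y))
  have hadd : ∀ v w, g (x, v + w, 0) = g (x, v, 0) + g (x, w, 0) := by
    intro v w
    have key : ∀ (c : ℝ → (Fin n → ℝ) × (Fin n → ℝ) × ℝ) (y : Fin n → ℝ), Continuous c →
        c 0 = (x, y, 0) → Tendsto (fun t => g (c t)) (𝓝[≠] (0 : ℝ)) (𝓝 (g (x, y, 0))) ∧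
          ∀ᶠ t in 𝓝[≠] (0 : ℝ), c t ∈ UOne ℝ U := by
      intro c y hc h0
      have ht : Tendsto c (𝓝[≠] (0 : ℝ)) (𝓝 (x, y, 0)) := by
        have := hc.tendsto 0
        rw [h0] at this
        exact this.mono_left nhdsWithin_le_nhds
      exact ⟨(hgc y).tendsto.comp ht, ht.eventually (hopen.mem_nhds (hmem0 y))⟩
    obtain ⟨a1, b1⟩ := key (fun t => (x, v + w, t)) (v + w) (by fun_prop) rfl
    obtain ⟨a2, b2⟩ := key (fun t => (x, v, t)) v (by fun_prop) rfl
    obtain ⟨a3, b3⟩ := key (fun t => (x + t • v, w, t)) w (by fun_prop) (by simp)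
    refine tendsto_nhds_unique a1 ((a2.add a3).congr' ?_)
    filter_upwards [b1, b2, b3, self_mem_nhdsWithin] with t h1 h2 h3 ht
    have ht : t ≠ 0 := ht
    rw [hq _ h1 ht, hq _ h2 ht, hq _ h3 ht]
    simp only [← smul_add]
    rw [smul_add t v w, ← add_assoc]
    congr 1
    abel
  let A : (Fin n → ℝ) →+ (Fin m → ℝ) := AddMonoidHom.mk' (fun y => g (x, y, 0)) hadd
  have hA : Continuous A := by
    rw [continuous_iff_continuousAt]
    intro y
    exact ContinuousAt.comp (g := g) (f := fun y => (x, y, (0 : ℝ))) (hgc y) (by fun_prop)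
  let L := A.toRealLinearMap hA
  have hL : ∀ y, L y = g (x, y, 0) := fun y => rfl
  refine ⟨L, hL, ?_⟩
  rw [hasFDerivAt_iff_isLittleO_nhds_zero, Asymptotics.isLittleO_iff]
  intro c hc
  have hU' : ∀ᶠ t : ℝ in 𝓝 0, ∀ v ∈ closedBall (0 : Fin n → ℝ) 1,
      (x, v, t) ∈ UOne ℝ U ∧ ‖g (x, v, t) - g (x, v, 0)‖ < c := by
    apply (isCompact_closedBall (0 : Fin n → ℝ) 1).eventually_forall_of_forall_eventually
    intro v _
    have ht : Tendsto (fun z : ℝ × (Fin n → ℝ) => (x, z.2, z.1)) (𝓝 (0, v)) (𝓝 (x, v, 0)) := by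
      have : Continuous (fun z : ℝ × (Fin n → ℝ) => (x, z.2, z.1)) := by fun_prop
      exact this.tendsto (0, v)
    have ht0 : Tendsto (fun z : ℝ × (Fin n → ℝ) => (x, z.2, (0 : ℝ))) (𝓝 (0, v))
        (𝓝 (x, v, 0)) := by
      have : Continuous (fun z : ℝ × (Fin n → ℝ) => (x, z.2, (0 : ℝ))) := by fun_prop
      exact this.tendsto (0, v)
    have hd := (((hgc v).tendsto.comp ht).sub ((hgc v).tendsto.comp ht0)).norm
    simp only [sub_self, norm_zero] at hd
    exact (ht.eventually (hopen.mem_nhds (hmem0 v))).and (hd.eventually (gt_mem_nhds hc))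
  have hn : Tendsto (fun h : Fin n → ℝ => ‖h‖) (𝓝 0) (𝓝 0) := by
    simpa using (continuous_norm (E := Fin n → ℝ)).tendsto 0
  filter_upwards [hn.eventually hU'] with h hh
  by_cases h0 : h = 0
  · simp [h0]
  have hne : ‖h‖ ≠ 0 := norm_ne_zero_iff.2 h0
  obtain ⟨h1, h2⟩ := hh (‖h‖⁻¹ • h) (by simp [norm_smul, hne])
  have e1 : ‖h‖ • (‖h‖⁻¹ • h) = h := by simp [smul_smul, hne]
  have e2 := hq _ h1 hne
  simp only [e1] at e2
  rw [e2, ← hL, map_smul, ← smul_sub, norm_smul, norm_inv, norm_norm,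
    inv_mul_lt_iff₀ (by positivity)] at h2
  linarith

/-- **Compatibility with classical real calculus.**  For `U ⊆ ℝⁿ` open and
`f : U → ℝᵐ`, the map `f` is continuously differentiable in the classical (Fréchet)
sense on `U` if and only if it is `C¹` in the extended-difference-quotient sense,
i.e. `f` is continuous on `U` and admits a continuous map `f^{[1]} : U^{[1]} → ℝᵐ`
extending its directional difference quotients. -/
theorem classical_real_C1_iff_diff_quotient_C1
    {n m : ℕ} {U : Set (Fin n → ℝ)} (hU : IsOpen U)
    (f : (Fin n → ℝ) → (Fin m → ℝ)) :
    ContDiffOn ℝ 1 f U ↔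
      (ContinuousOn f U ∧
        ∃ g : (Fin n → ℝ) × (Fin n → ℝ) × ℝ → (Fin m → ℝ),
          ContinuousOn g (UOne ℝ U) ∧ IsDiffQuotOn ℝ U f g) := by
  constructor
  · intro hf
    exact ⟨hf.continuousOn, forward_aux hU f hf⟩
  · rintro ⟨_, g, hg, hq⟩
    have hb := backward_aux hU f g hg hq
    rw [← zero_add (1 : WithTop ℕ∞), contDiffOn_succ_iff_fderiv_of_isOpen hU]
    refine ⟨?_, by simp, ?_⟩
    · intro x hx
      obtain ⟨L, _, hL⟩ := hb x hx
      exact hL.differentiableAt.differentiableWithinAt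
    · rw [contDiffOn_zero, continuousOn_clm_apply]
      intro y
      have h1 : ContinuousOn (fun x => g (x, y, (0 : ℝ))) U :=
        hg.comp (f := fun x => (x, y, (0 : ℝ))) (by fun_prop)
          (fun x hx => ⟨hx, by simpa using hx⟩)
      refine h1.congr ?_
      intro x hx
      obtain ⟨L, h2, hL⟩ := hb x hx
      simp only [hL.fderiv, h2]
end

section
/- Compatibility with Schikhof's ultrametric calculus: Let (𝕜,|·|) be a complete ultrametric valued field, U ⊆ 𝕜 open, and f : U → 𝕜 a map. Then f is C¹ in the extended-difference-quotient sense (f is continuous and there exists a continuous map f^{[1]} : U^{[1]} → 𝕜 with f^{[1]}(x,y,t) = t⁻¹·(f(x + t·y) − f(x)) for all (x,y,t) ∈ U^{[1]} with t ≠ 0) if and only if f is C¹ in Schikhof's sense, i.e. there exists a continuous map Φ : U × U → 𝕜 with Φ(x,y) = (f(x) − f(y))/(x − y) for all x, y ∈ U with x ≠ y. -/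
open Set Metric Filter Topology

/-- **Compatibility with Schikhof's ultrametric calculus.**  Let `𝕜` be a complete
ultrametric valued field, `U ⊆ 𝕜` open, and `f : U → 𝕜`.  Then `f` is `C¹` in the
extended-difference-quotient sense if and only if `f` is `C¹` in Schikhof's sense,
i.e. there is a continuous map `Φ : U × U → 𝕜` with `Φ (x, y) = (f x − f y)/(x − y)`
for all `x ≠ y` in `U`. -/
theorem diff_quotient_C1_iff_schikhof_C1
    {𝕜 : Type*} [NontriviallyNormedField 𝕜] [CompleteSpace 𝕜] [IsUltrametricDist 𝕜]
    {U : Set 𝕜} (hU : IsOpen U) (f : 𝕜 → 𝕜) :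
    (ContinuousOn f U ∧
      ∃ g : 𝕜 × 𝕜 × 𝕜 → 𝕜, ContinuousOn g (UOne 𝕜 U) ∧ IsDiffQuotOn 𝕜 U f g) ↔
    (∃ Φ : 𝕜 × 𝕜 → 𝕜, ContinuousOn Φ (U ×ˢ U) ∧
      ∀ x ∈ U, ∀ y ∈ U, x ≠ y → Φ (x, y) = (f x - f y) / (x - y)) := by
  constructor
  · rintro ⟨_, g, hg, hq⟩
    refine ⟨fun p => g (p.2, 1, p.1 - p.2), ?_, ?_⟩
    · refine hg.comp (Continuous.continuousOn (by fun_prop)) ?_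
      rintro ⟨x, y⟩ ⟨hx, hy⟩
      refine ⟨hy, ?_⟩
      simpa using hx
    · intro x hx y hy hxy
      have h := hq (y, 1, x - y) ⟨hy, by simpa using hx⟩ (sub_ne_zero.mpr hxy)
      simp only [smul_eq_mul, mul_one, add_sub_cancel] at h
      simp only [h]
      rw [div_eq_inv_mul]
  · rintro ⟨Φ, hΦ, hq⟩
    refine ⟨?_, fun p => p.2.1 * Φ (p.1 + p.2.2 * p.2.1, p.1), ?_, ?_⟩
    · intro x0 hx0
      have h1 : ContinuousOn (fun x => f x0 + (x - x0) * Φ (x, x0)) U := by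
        have h2 : ContinuousOn (fun x => Φ (x, x0)) U :=
          hΦ.comp (f := fun x => (x, x0)) (Continuous.continuousOn (by fun_prop))
            (fun x hx => ⟨hx, hx0⟩)
        exact continuousOn_const.add ((continuousOn_id.sub continuousOn_const).mul h2)
      refine (h1.congr ?_) x0 hx0
      intro x hx
      by_cases h : x = x0
      · simp [h]
      · have h3 : x - x0 ≠ 0 := sub_ne_zero.mpr h
        simp only [hq x hx x0 hx0 h]
        field_simp
        ring
    · refine ContinuousOn.mul (Continuous.continuousOn (by fun_prop)) ?_
      exact hΦ.comp (f := fun p : 𝕜 × 𝕜 × 𝕜 => (p.1 + p.2.2 * p.2.1, p.1))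
        (Continuous.continuousOn (by fun_prop)) (fun p hp => ⟨hp.2, hp.1⟩)
    · rintro ⟨x, y, t⟩ ⟨hx, hy⟩ ht
      simp only [smul_eq_mul] at hx hy ht ⊢
      by_cases h : y = 0
      · simp [h]
      · have hne : x + t * y ≠ x := by simp [ht, h]
        rw [hq _ hy _ hx hne, add_sub_cancel_left]
        field_simp
end

section
/- C¹ implies strict differentiability in finite dimensions over locally compact fields: Let (𝕜,|·|) be a locally compact valued field, E a finite-dimensional normed 𝕜-vector space, F a normed 𝕜-vector space, U ⊆ E open, and f : U → F a C¹ map with witnessing continuous map f^{[1]} : U^{[1]} → F. Then f is strictly differentiable at every point of U: for each x ∈ U there is a continuous 𝕜-linear map A : E → F with A(y) = f^{[1]}(x,y,0) for all y ∈ E such that for every ε > 0 there is a neighbourhood W of x in U with ‖f(y) − f(z) − A(y − z)‖ ≤ ε·‖y − z‖ for all y, z ∈ W. -/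
open Set Metric Filter Topology

/-- **C¹ implies strict differentiability in finite dimensions over locally compact
fields.**  Let `𝕜` be a locally compact valued field, `E` a finite-dimensional
normed `𝕜`-vector space, `F` a normed `𝕜`-vector space, `U ⊆ E` open, and
`f : U → F` a `C¹` map with witnessing continuous map `g = f^{[1]}`.  Then `f` is
strictly differentiable at every `x ∈ U`, with derivative the continuous linear map
`y ↦ g (x, y, 0)`. -/
theorem C1_implies_strictly_differentiable_of_locallyCompact
    {𝕜 : Type*} [NontriviallyNormedField 𝕜] [LocallyCompactSpace 𝕜]
    {E F : Type*} [NormedAddCommGroup E] [NormedSpace 𝕜 E] [FiniteDimensional 𝕜 E]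
    [NormedAddCommGroup F] [NormedSpace 𝕜 F]
    {U : Set E} (hU : IsOpen U)
    (f : E → F) (hfc : ContinuousOn f U)
    (g : E × E × 𝕜 → F)
    (hgc : ContinuousOn g (UOne 𝕜 U)) (hgq : IsDiffQuotOn 𝕜 U f g) :
    ∀ x ∈ U, ∃ A : E →L[𝕜] F, (∀ y : E, A y = g (x, y, (0 : 𝕜))) ∧
      ∀ ε : ℝ, 0 < ε → ∃ W : Set E, IsOpen W ∧ x ∈ W ∧ W ⊆ U ∧
        ∀ y ∈ W, ∀ z ∈ W, ‖f y - f z - A (y - z)‖ ≤ ε * ‖y - z‖ := by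
  intro x hx
  have hopen : IsOpen (UOne 𝕜 U) := by
    have h1 : IsOpen {p : E × E × 𝕜 | p.1 ∈ U} := hU.preimage continuous_fst
    have h2 : IsOpen {p : E × E × 𝕜 | p.1 + p.2.2 • p.2.1 ∈ U} :=
      hU.preimage (by fun_prop)
    exact h1.inter h2
  have hmem : ∀ v : E, (x, v, (0 : 𝕜)) ∈ UOne 𝕜 U := fun v => by simp [UOne, hx]
  have hat : ∀ v : E, ContinuousAt g (x, v, (0 : 𝕜)) := fun v =>
    hgc.continuousAt (hopen.mem_nhds (hmem v))
  have hne : ∀ᶠ t : 𝕜 in 𝓝[≠] 0, t ≠ 0 := eventually_mem_nhdsWithin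
  -- composition with curves through `(x, v, 0)`
  have hcurve : ∀ (v : E) (γ : 𝕜 → E × E × 𝕜), Continuous γ → γ 0 = (x, v, 0) →
      Tendsto (fun t => g (γ t)) (𝓝[≠] 0) (𝓝 (g (x, v, 0))) ∧
        ∀ᶠ t in 𝓝[≠] (0 : 𝕜), γ t ∈ UOne 𝕜 U := by
    intro v γ hγ h0
    have ht : Tendsto γ (𝓝[≠] 0) (𝓝 (x, v, 0)) := by
      rw [← h0]
      exact hγ.continuousAt.tendsto.mono_left nhdsWithin_le_nhds
    exact ⟨(hat v).tendsto.comp ht, ht.eventually (hopen.mem_nhds (hmem v))⟩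
  have hadd : ∀ v w : E, g (x, v + w, (0 : 𝕜)) = g (x, v, 0) + g (x, w, 0) := by
    intro v w
    obtain ⟨l1, m1⟩ := hcurve (v + w) (fun t => (x, v + w, t)) (by fun_prop) rfl
    obtain ⟨l2, m2⟩ := hcurve v (fun t => (x, v, t)) (by fun_prop) rfl
    obtain ⟨l3, m3⟩ := hcurve w (fun t => (x + t • v, w, t)) (by fun_prop) (by simp)
    refine tendsto_nhds_unique l1 ((l2.add l3).congr' ?_)
    filter_upwards [m1, m2, m3, hne] with t h1 h2 h3 ht
    rw [hgq _ h1 ht, hgq _ h2 ht, hgq _ h3 ht]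
    simp only [smul_add t, add_assoc, smul_sub]
    abel
  have hsmul : ∀ (c : 𝕜) (v : E), g (x, c • v, (0 : 𝕜)) = c • g (x, v, 0) := by
    intro c v
    obtain ⟨l1, m1⟩ := hcurve (c • v) (fun t => (x, c • v, t)) (by fun_prop) rfl
    obtain ⟨l2, m2⟩ := hcurve v (fun t => (x, v, t * c)) (by fun_prop) (by simp)
    refine tendsto_nhds_unique l1 ((l2.const_smul c).congr' ?_)
    filter_upwards [m1, m2, hne] with t h1 h2 ht
    rw [hgq _ h1 ht]
    by_cases hc : c = 0
    · simp [hc]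
    · rw [hgq _ h2 (mul_ne_zero ht hc)]
      simp only [smul_smul]
      congr 1
      field_simp
  let A : E →L[𝕜] F :=
    { toFun := fun v => g (x, v, 0)
      map_add' := hadd
      map_smul' := hsmul
      cont := continuous_iff_continuousAt.2 fun v =>
        ContinuousAt.comp (f := fun v : E => (x, v, (0 : 𝕜))) (hat v) (by fun_prop) }
  have hA : ∀ v, A v = g (x, v, 0) := fun v => rfl
  refine ⟨A, hA, fun ε hε => ?_⟩
  obtain ⟨c, hc⟩ := NormedField.exists_one_lt_norm 𝕜
  have hc0 : 0 < ‖c‖ := by linarith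
  have : ProperSpace 𝕜 := ProperSpace.of_locallyCompactSpace 𝕜
  have : ProperSpace E := FiniteDimensional.proper 𝕜 E
  have key : ∀ᶠ q : E × 𝕜 in 𝓝 (x, 0), ∀ v ∈ closedBall (0 : E) 1,
      ‖g (q.1, v, q.2) - A v‖ < ε / ‖c‖ := by
    refine (isCompact_closedBall (0 : E) 1).eventually_forall_of_forall_eventually ?_
    intro v _
    have h1 : ContinuousAt (fun z : (E × 𝕜) × E => g (z.1.1, z.2, z.1.2) - A z.2)
        ((x, 0), v) :=
      (ContinuousAt.comp (f := fun z : (E × 𝕜) × E => (z.1.1, z.2, z.1.2))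
        (hat v) (by fun_prop)).sub (by fun_prop)
    refine h1.norm.eventually_lt continuousAt_const ?_
    simp only [hA, sub_self, norm_zero]
    positivity
  rw [nhds_prod_eq] at key
  obtain ⟨p, hp, q, hq, hpq⟩ := eventually_prod_iff.1 key
  obtain ⟨δ, hδ, hδq⟩ := Metric.eventually_nhds_iff.1 hq
  obtain ⟨V, hV, hVo, hxV⟩ := _root_.eventually_nhds_iff.1 hp
  set r : ℝ := δ / (2 * ‖c‖) with hr
  have hr0 : 0 < r := by positivity
  refine ⟨U ∩ V ∩ ball x r, (hU.inter hVo).inter isOpen_ball,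
    ⟨⟨hx, hxV⟩, mem_ball_self hr0⟩, fun y hy => hy.1.1, ?_⟩
  rintro y ⟨⟨hyU, hyV⟩, hyr⟩ z ⟨⟨hzU, hzV⟩, hzr⟩
  by_cases hyz : y - z = 0
  · have : y = z := sub_eq_zero.1 hyz
    simp [this]
  obtain ⟨d, hd, hd1, -, hd2⟩ := rescale_to_shell hc one_pos hyz
  have hd2 : ‖d‖⁻¹ ≤ ‖c‖ * ‖y - z‖ := by simpa using hd2
  have hdist : ‖y - z‖ < 2 * r := by
    rw [← dist_eq_norm]
    have := dist_triangle_right y z x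
    rw [mem_ball] at hyr hzr
    linarith
  have hlt : ‖d‖⁻¹ < δ := by
    calc ‖d‖⁻¹ ≤ ‖c‖ * ‖y - z‖ := hd2
      _ < ‖c‖ * (2 * r) := by gcongr
      _ = δ := by rw [hr]; field_simp
  have hq' : q d⁻¹ := hδq (by simpa [dist_eq_norm] using hlt)
  have hk := hpq (hV z hzV) hq' (d • (y - z)) (by simpa using hd1.le)
  have heq : z + d⁻¹ • d • (y - z) = y := by
    rw [inv_smul_smul₀ hd]; abel
  have hm : (z, d • (y - z), d⁻¹) ∈ UOne 𝕜 U := by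
    refine ⟨hzU, ?_⟩
    simp only [heq, hyU]
  have hgz := hgq _ hm (inv_ne_zero hd)
  simp only [heq, inv_inv] at hgz
  simp only [hgz, map_smul, ← smul_sub] at hk
  rw [norm_smul] at hk
  have hdp : 0 < ‖d‖ := norm_pos_iff.2 hd
  calc ‖f y - f z - A (y - z)‖ = ‖d‖⁻¹ * (‖d‖ * ‖f y - f z - A (y - z)‖) := by
        field_simp
    _ ≤ (‖c‖ * ‖y - z‖) * (ε / ‖c‖) := by gcongr
    _ = ε * ‖y - z‖ := by field_simp
end

section
/- C² implies strict differentiability: Let (𝕜,|·|) be a valued field, E and F normed 𝕜-vector spaces, U ⊆ E open, and f : U → F a C² map with witnessing continuous map f^{[1]} : U^{[1]} → F (so f^{[1]} is itself C¹ on U^{[1]}). Then f is strictly differentiable at every point of U: for each x ∈ U there is a continuous 𝕜-linear map A : E → F with A(y) = f^{[1]}(x,y,0) for all y ∈ E such that for every ε > 0 there is a neighbourhood W of x in U with ‖f(y) − f(z) − A(y − z)‖ ≤ ε·‖y − z‖ for all y, z ∈ W. -/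
open Set Metric Filter Topology

theorem isOpen_UOne_aux {𝕜 : Type*} [NontriviallyNormedField 𝕜]
    {E : Type*} [NormedAddCommGroup E] [NormedSpace 𝕜 E]
    {U : Set E} (hU : IsOpen U) : IsOpen (UOne 𝕜 U) := by
  have h1 : IsOpen ((fun p : E × E × 𝕜 => p.1) ⁻¹' U) := hU.preimage (by fun_prop)
  have h2 : IsOpen ((fun p : E × E × 𝕜 => p.1 + p.2.2 • p.2.1) ⁻¹' U) :=
    hU.preimage (by fun_prop)
  exact h1.inter h2

theorem exists_linear_aux {𝕜 : Type*} [NontriviallyNormedField 𝕜]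
    {E F : Type*} [NormedAddCommGroup E] [NormedSpace 𝕜 E]
    [NormedAddCommGroup F] [NormedSpace 𝕜 F]
    {U : Set E} (hU : IsOpen U) (f : E → F) (g : E × E × 𝕜 → F)
    (hgc : ContinuousOn g (UOne 𝕜 U)) (hgq : IsDiffQuotOn 𝕜 U f g)
    (x : E) (hx : x ∈ U) : ∃ A : E →L[𝕜] F, ∀ y : E, A y = g (x, y, (0 : 𝕜)) := by
  have hO : IsOpen (UOne 𝕜 U) := isOpen_UOne_aux hU
  have hmem : ∀ y : E, (x, y, (0 : 𝕜)) ∈ UOne 𝕜 U := fun y => by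
    simp [UOne, hx]
  have hat : ∀ y : E, ContinuousAt g (x, y, (0 : 𝕜)) := fun y =>
    hgc.continuousAt (hO.mem_nhds (hmem y))
  -- generic limit along a continuous curve
  have hlim : ∀ (y : E) (c : 𝕜 → E × E × 𝕜), Continuous c → c 0 = (x, y, 0) →
      Tendsto (fun t => g (c t)) (𝓝[≠] (0 : 𝕜)) (𝓝 (g (x, y, 0))) := by
    intro y c hc h0
    have h1 : Tendsto c (𝓝 0) (𝓝 (x, y, 0)) := h0 ▸ hc.tendsto 0
    exact ((hat y).tendsto.comp h1).mono_left nhdsWithin_le_nhds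
  have hev : ∀ (y : E) (c : 𝕜 → E × E × 𝕜), Continuous c → c 0 = (x, y, 0) →
      ∀ᶠ t in 𝓝[≠] (0 : 𝕜), c t ∈ UOne 𝕜 U := by
    intro y c hc h0
    have h1 : Tendsto c (𝓝 0) (𝓝 (x, y, 0)) := h0 ▸ hc.tendsto 0
    exact nhdsWithin_le_nhds (h1.eventually (hO.mem_nhds (hmem y)))
  have hadd : ∀ y z : E, g (x, y + z, 0) = g (x, y, 0) + g (x, z, 0) := by
    intro y z
    have c1 : Continuous (fun t : 𝕜 => (x, y + z, t)) := by fun_prop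
    have c2 : Continuous (fun t : 𝕜 => (x, y, t)) := by fun_prop
    have c3 : Continuous (fun t : 𝕜 => (x + t • y, z, t)) := by fun_prop
    refine tendsto_nhds_unique_of_eventuallyEq (hlim (y + z) _ c1 rfl)
      ((hlim y _ c2 rfl).add (hlim z _ c3 (by simp))) ?_
    filter_upwards [hev _ _ c1 rfl, hev _ _ c2 rfl, hev z _ c3 (by simp),
      self_mem_nhdsWithin] with t h1 h2 h3 ht
    rw [hgq _ h1 ht, hgq _ h2 ht, hgq _ h3 ht]
    simp only
    rw [← smul_add, smul_add t y z, ← add_assoc]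
    congr 1
    abel
  have hsmul : ∀ (s : 𝕜) (y : E), g (x, s • y, 0) = s • g (x, y, 0) := by
    intro s y
    have c1 : Continuous (fun t : 𝕜 => (x, s • y, t)) := by fun_prop
    have c2 : Continuous (fun t : 𝕜 => (x, y, s * t)) := by fun_prop
    refine tendsto_nhds_unique_of_eventuallyEq (hlim (s • y) _ c1 rfl)
      ((hlim y _ c2 (by simp)).const_smul s) ?_
    filter_upwards [hev _ _ c1 rfl, hev y _ c2 (by simp),
      self_mem_nhdsWithin] with t h1 h2 ht
    have ht' : t ≠ 0 := ht
    rw [hgq _ h1 ht']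
    by_cases hs : s = 0
    · simp [hs]
    · rw [hgq _ h2 (mul_ne_zero hs ht')]
      simp only
      rw [smul_smul, smul_smul, mul_comm t s]
      congr 1
      field_simp
  have hcont : Continuous (fun y : E => g (x, y, (0 : 𝕜))) := by
    rw [continuous_iff_continuousAt]
    intro y
    exact ContinuousAt.comp (f := fun y : E => (x, y, (0 : 𝕜))) (hat y) (by fun_prop)
  exact ⟨⟨⟨⟨fun y => g (x, y, 0), hadd⟩, hsmul⟩, hcont⟩, fun y => rfl⟩

/-- **C² implies strict differentiability.**  Let `𝕜` be a valued field, `E` and `F`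
normed `𝕜`-vector spaces, `U ⊆ E` open, and `f : U → F` a `C²` map with witnessing
continuous map `g = f^{[1]}` (itself `C¹` on `U^{[1]}`).  Then `f` is strictly
differentiable at every `x ∈ U`, with derivative the continuous linear map
`y ↦ g (x, y, 0)`. -/
theorem C2_implies_strictly_differentiable
    {𝕜 : Type*} [NontriviallyNormedField 𝕜]
    {E F : Type*} [NormedAddCommGroup E] [NormedSpace 𝕜 E]
    [NormedAddCommGroup F] [NormedSpace 𝕜 F]
    {U : Set E} (hU : IsOpen U)
    (f : E → F) (hfc : ContinuousOn f U)
    (g : E × E × 𝕜 → F)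
    (hgc : ContinuousOn g (UOne 𝕜 U)) (hgq : IsDiffQuotOn 𝕜 U f g)
    (hgC1 : IsC1On 𝕜 (UOne 𝕜 U) g) :
    ∀ x ∈ U, ∃ A : E →L[𝕜] F, (∀ y : E, A y = g (x, y, (0 : 𝕜))) ∧
      ∀ ε : ℝ, 0 < ε → ∃ W : Set E, IsOpen W ∧ x ∈ W ∧ W ⊆ U ∧
        ∀ y ∈ W, ∀ z ∈ W, ‖f y - f z - A (y - z)‖ ≤ ε * ‖y - z‖ := by
  intro x hx
  obtain ⟨A, hA⟩ := exists_linear_aux hU f g hgc hgq x hx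
  refine ⟨A, hA, ?_⟩
  intro ε hε
  obtain ⟨-, h, hhc, hhq⟩ := hgC1
  have hOO : IsOpen (UOne 𝕜 (UOne 𝕜 U)) := isOpen_UOne_aux (isOpen_UOne_aux hU)
  set P : (E × E × 𝕜) × (E × E × 𝕜) × 𝕜 := ((x, 0, 0), (0, 0, 0), 0) with hP
  have hPm : P ∈ UOne 𝕜 (UOne 𝕜 U) := by simp [UOne, hP, hx]
  have hPc : ContinuousAt h P := hhc.continuousAt (hOO.mem_nhds hPm)
  have hbd : ∀ᶠ p in 𝓝 P, ‖h p‖ < ‖h P‖ + 1 :=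
    hPc.norm.eventually (gt_mem_nhds (lt_add_one _))
  obtain ⟨η, hη, hball⟩ := Metric.eventually_nhds_iff.1 ((hOO.eventually_mem hPm).and hbd)
  set M : ℝ := ‖h P‖ + 1 with hM
  have hMpos : 0 < M := by positivity
  obtain ⟨c, hc⟩ := NormedField.exists_one_lt_norm 𝕜
  have hcpos : 0 < ‖c‖ := by linarith
  set K : ℝ := η⁻¹ * ‖c‖ with hK
  have hKpos : 0 < K := by positivity
  set L : ℝ := K * (1 + 2 * K) with hL
  have hLpos : 0 < L := by positivity
  obtain ⟨ρ, hρ, hρU⟩ := Metric.isOpen_iff.1 hU x hx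
  set r : ℝ := min ρ (min (η / (2 * L)) (ε / (K * L * M))) with hr
  have hrpos : 0 < r := by positivity
  have hr1 : r ≤ ρ := min_le_left _ _
  have hr2 : r ≤ η / (2 * L) := (min_le_right _ _).trans (min_le_left _ _)
  have hr3 : r ≤ ε / (K * L * M) := (min_le_right _ _).trans (min_le_right _ _)
  refine ⟨ball x r, isOpen_ball, mem_ball_self hrpos, (ball_subset_ball hr1).trans hρU, ?_⟩
  intro y hy z hz
  by_cases hyz : y - z = 0
  · have : y = z := sub_eq_zero.1 hyz
    simp [this]
  rw [mem_ball, dist_eq_norm] at hy hz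
  have hyz2 : ‖y - z‖ ≤ 2 * r := by
    have : y - z = (y - x) - (z - x) := by abel
    rw [this]
    have := norm_sub_le (y - x) (z - x)
    linarith
  obtain ⟨d, hd0, hd1, -, hd2⟩ := rescale_to_shell hc hη hyz
  set t : 𝕜 := d⁻¹ with ht
  set v : E := d • (y - z) with hv
  have ht0 : t ≠ 0 := inv_ne_zero hd0
  have htn : ‖t‖ ≤ K * ‖y - z‖ := by rw [ht, norm_inv]; exact hd2
  have htv : t • v = y - z := by rw [ht, hv, inv_smul_smul₀ hd0]
  set q : E × E × 𝕜 := (z - x, 0, t) with hq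
  have hq0 : q ≠ 0 := by
    intro hh
    exact ht0 (congrArg (fun p : E × E × 𝕜 => p.2.2) hh)
  have hqn : ‖q‖ ≤ (1 + 2 * K) * r := by
    have h1 : ‖t‖ ≤ K * (2 * r) := htn.trans (by gcongr)
    have h2 : 0 < K * r := by positivity
    rw [hq, Prod.norm_def, Prod.norm_def]
    simp only [norm_zero]
    refine max_le ?_ (max_le ?_ ?_)
    · nlinarith
    · positivity
    · nlinarith
  obtain ⟨e, he0, he1, -, he2⟩ := rescale_to_shell hc hη hq0
  set s : 𝕜 := e⁻¹ with hs
  have hs0 : s ≠ 0 := inv_ne_zero he0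
  have hsn : ‖s‖ ≤ L * r := by
    rw [hs, norm_inv]
    calc ‖e‖⁻¹ ≤ K * ‖q‖ := he2
      _ ≤ K * ((1 + 2 * K) * r) := by gcongr
      _ = L * r := by rw [hL]; ring
  have hsη : ‖s‖ < η := by
    have : L * r ≤ L * (η / (2 * L)) := by gcongr
    have h2 : L * (η / (2 * L)) = η / 2 := by field_simp
    linarith
  have hseq : s • (e • q) = q := by rw [hs, inv_smul_smul₀ he0]
  have hdist : dist (((x, v, (0 : 𝕜)), e • q, s) : (E × E × 𝕜) × (E × E × 𝕜) × 𝕜) P < η := by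
    have e1 : (((x, v, (0 : 𝕜)), e • q, s) : (E × E × 𝕜) × (E × E × 𝕜) × 𝕜) - P
        = ((0, v, 0), e • q, s) := by
      rw [hP]
      ext <;> simp
    rw [dist_eq_norm, e1, Prod.norm_def, Prod.norm_def, Prod.norm_def, Prod.norm_def]
    simp only [norm_zero]
    exact max_lt (max_lt hη (max_lt hd1 hη)) (max_lt he1 hsη)
  obtain ⟨hm, hb⟩ := hball hdist
  have hquot := hhq _ hm hs0
  have hm2 := hm.2
  have hsum : ((x, v, (0 : 𝕜)) : E × E × 𝕜) + q = (z, v, t) := by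
    rw [hq]
    ext <;> simp
  simp only [hseq, hsum] at hquot hm2
  have hg := hgq _ hm2 ht0
  simp only [htv, add_sub_cancel] at hg
  have hdiff : g (z, v, t) - g (x, v, 0) = s • h ((x, v, 0), e • q, s) := by
    rw [hquot, smul_inv_smul₀ hs0]
  have hmain : f y - f z - A (y - z) = t • (s • h ((x, v, 0), e • q, s)) := by
    rw [← hdiff, hg, smul_sub, smul_inv_smul₀ ht0, ← hA v, ← map_smul, htv]
  rw [hmain, norm_smul, norm_smul]
  calc ‖t‖ * (‖s‖ * ‖h ((x, v, 0), e • q, s)‖)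
      ≤ (K * ‖y - z‖) * ((L * r) * M) := by gcongr
    _ = (K * L * M) * r * ‖y - z‖ := by ring
    _ ≤ (K * L * M) * (ε / (K * L * M)) * ‖y - z‖ := by gcongr
    _ = ε * ‖y - z‖ := by field_simp
end
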